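/- arXiv:0712.2153 — 2 statements merged into one kernel-verified Lean document; each statement's English description precedes it below -/
import Mathlib

section
/- Let n ≥ 7. The assignment σ_i ↦ ∏_{j=1}^{i−1}(j, n+j) · (i, n+i+1, n+i, i+1) · ∏_{j=i+2}^{n}(j, n+j), for 1 ≤ i ≤ n−1, induces a well-defined group homomorphism ρ_{L2} : B_n → Sym_{2n}, and ρ_{L2} is transitive. -/
/-- The braid relations on `n-1` generators; generator `i : Fin (n-1)` stands for the
Artin generator `σ_{i+1}` (so the indexing is 0-based). The relations are
`σ_i σ_j = σ_j σ_i` for `|i-j| ≥ 2` and `σ_i σ_j σ_i = σ_j σ_i σ_j` for `|i-j| = 1`. -/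
def braidRels (n : ℕ) : Set (FreeGroup (Fin (n - 1))) :=
  { r | ∃ i j : Fin (n - 1), ((i : ℕ) + 2 ≤ (j : ℕ) ∨ (j : ℕ) + 2 ≤ (i : ℕ)) ∧
      r = FreeGroup.of i * FreeGroup.of j * (FreeGroup.of j * FreeGroup.of i)⁻¹ } ∪
  { r | ∃ i j : Fin (n - 1), (j : ℕ) = (i : ℕ) + 1 ∧
      r = FreeGroup.of i * FreeGroup.of j * FreeGroup.of i *
          (FreeGroup.of j * FreeGroup.of i * FreeGroup.of j)⁻¹ }

/-- The braid group `B_n`, given by the Artin presentation. -/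
abbrev BraidGroup (n : ℕ) := PresentedGroup (braidRels n)

/-- The Artin generator `σ_{i+1}` of the braid group `B_n`, for `i : Fin (n-1)`. -/
def σ {n : ℕ} (i : Fin (n - 1)) : BraidGroup n := PresentedGroup.of i

/-- A homomorphism to the symmetric group `Sym_k = Perm (Fin k)` is transitive if its
image acts transitively on the `k` points. -/
def IsTransitiveHom {G : Type*} [Group G] {k : ℕ} (φ : G →* Equiv.Perm (Fin k)) : Prop :=
  ∀ x y : Fin k, ∃ g : G, φ g x = y

/-- A homomorphism from `B_n` is cyclic if it sends all the generators `σ_1, …, σ_{n-1}`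
to a single element. -/
def IsCyclicHom {n : ℕ} {H : Type*} [Group H] (ψ : BraidGroup n →* H) : Prop :=
  ∀ i j : Fin (n - 1), ψ (σ i) = ψ (σ j)

/-- The transposition `(j, n+j)` (0-based) in `Sym_{2n}`. -/
def tw (n : ℕ) (j : Fin n) : Equiv.Perm (Fin (2 * n)) :=
  Equiv.swap ⟨j, by have := j.isLt; omega⟩ ⟨n + j, by have := j.isLt; omega⟩

/-- The 4-cycle `(a, b, c, d)` sending `a ↦ b ↦ c ↦ d ↦ a` (for pairwise distinct
points), written as the product of transpositions `(a d)(a c)(a b)`. -/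
def cyc4 {m : ℕ} (a b c d : Fin m) : Equiv.Perm (Fin m) :=
  Equiv.swap a d * Equiv.swap a c * Equiv.swap a b

/-- `ρ_{L1}(σ_{i+1})`: the 4-cycle `(i, n+i+1, n+i, i+1)` on the 0-based points of
`Sym_{2n}`, for `i : Fin (n-1)`. -/
def linL1Gen (n : ℕ) (i : Fin (n - 1)) : Equiv.Perm (Fin (2 * n)) :=
  cyc4 ⟨i, by have := i.isLt; omega⟩ ⟨n + i + 1, by have := i.isLt; omega⟩
    ⟨n + i, by have := i.isLt; omega⟩ ⟨(i : ℕ) + 1, by have := i.isLt; omega⟩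

/-- The product `∏_{j < i} (j, n+j)` (0-based) in `Sym_{2n}`. -/
def lowTw (n : ℕ) (i : Fin (n - 1)) : Equiv.Perm (Fin (2 * n)) :=
  ((List.finRange n).map (fun j : Fin n => if (j : ℕ) < (i : ℕ) then tw n j else 1)).prod

/-- The product `∏_{j ≥ i+2} (j, n+j)` (0-based) in `Sym_{2n}`. -/
def highTw (n : ℕ) (i : Fin (n - 1)) : Equiv.Perm (Fin (2 * n)) :=
  ((List.finRange n).map (fun j : Fin n => if (i : ℕ) + 2 ≤ (j : ℕ) then tw n j else 1)).prod

/-- `ρ_{L2}(σ_{i+1}) = ∏_{j<i}(j, n+j) · (i, n+i+1, n+i, i+1) · ∏_{j≥i+2}(j, n+j)`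
(0-based) in `Sym_{2n}`. -/
def linL2Gen (n : ℕ) (i : Fin (n - 1)) : Equiv.Perm (Fin (2 * n)) :=
  lowTw n i * linL1Gen n i * highTw n i

/-- `ρ_{L3}(σ_{i+1}) = ∏_{j<i}(j, n+j) · (i, n+i+1)(i+1, n+i) · ∏_{j≥i+2}(j, n+j)`
(0-based) in `Sym_{2n}`. -/
def linL3Gen (n : ℕ) (i : Fin (n - 1)) : Equiv.Perm (Fin (2 * n)) :=
  lowTw n i *
    (Equiv.swap ⟨i, by have := i.isLt; omega⟩ ⟨n + i + 1, by have := i.isLt; omega⟩ *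
     Equiv.swap ⟨(i : ℕ) + 1, by have := i.isLt; omega⟩ ⟨n + i, by have := i.isLt; omega⟩) *
  highTw n i

def natFlip (n x : ℕ) : ℕ := if x < n then n + x else x - n

def natGen (n i x : ℕ) : ℕ :=
  if x = i then n + i + 1 else if x = i + 1 then i else if x = n + i then i + 1
  else if x = n + i + 1 then n + i else if x < n then n + x else x - n

theorem tw_val (n : ℕ) (j : Fin n) (x : Fin (2 * n)) :
    (tw n j x : ℕ) = if (x : ℕ) = j then n + j else if (x : ℕ) = n + j then (j : ℕ) else x := by
  unfold tw
  rw [Equiv.swap_apply_def]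
  simp only [Fin.ext_iff]
  split_ifs <;> rfl

theorem prod_val (n : ℕ) (p : ℕ → Prop) [DecidablePred p] (l : List (Fin n)) (hl : l.Nodup)
    (x : Fin (2 * n)) :
    (((l.map (fun j : Fin n => if p (j : ℕ) then tw n j else 1)).prod x : Fin (2 * n)) : ℕ) =
      if ∃ j ∈ l, p (j : ℕ) ∧ ((x : ℕ) = j ∨ (x : ℕ) = n + j) then natFlip n x else x := by
  induction l with
  | nil => simp
  | cons a l ih =>
    obtain ⟨ha, hl⟩ := List.nodup_cons.1 hl
    have ih := ih hl
    rw [List.map_cons, List.prod_cons, Equiv.Perm.mul_apply]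
    set y := (l.map (fun j : Fin n => if p (j : ℕ) then tw n j else 1)).prod x with hy
    have hA := a.isLt
    have hstep : (((if p (a : ℕ) then tw n a else 1) y : Fin (2 * n)) : ℕ) =
        if p (a : ℕ) then
          (if (y : ℕ) = a then n + a else if (y : ℕ) = n + a then (a : ℕ) else y) else y := by
      by_cases hp : p (a : ℕ)
      · rw [if_pos hp, if_pos hp, tw_val]
      · rw [if_neg hp, if_neg hp, Equiv.Perm.one_apply]
    rw [hstep]
    by_cases h : ∃ j ∈ l, p (j : ℕ) ∧ ((x : ℕ) = j ∨ (x : ℕ) = n + j)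
    · have h' : ∃ j ∈ a :: l, p (j : ℕ) ∧ ((x : ℕ) = j ∨ (x : ℕ) = n + j) := by
        obtain ⟨j, h1, h2⟩ := h
        exact ⟨j, List.mem_cons_of_mem _ h1, h2⟩
      rw [if_pos h] at ih
      simp only [h', if_true, ih]
      obtain ⟨j, h1, h2, h3⟩ := h
      have hj := j.isLt
      have hne : (j : ℕ) ≠ a := fun h => ha (by rw [← Fin.ext h]; exact h1)
      unfold natFlip
      split_ifs <;> omega
    · rw [if_neg h] at ih
      by_cases hc : p (a : ℕ) ∧ ((x : ℕ) = a ∨ (x : ℕ) = n + a)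
      · have h' : ∃ j ∈ a :: l, p (j : ℕ) ∧ ((x : ℕ) = j ∨ (x : ℕ) = n + j) :=
          ⟨a, List.mem_cons_self, hc⟩
        simp only [h', if_true, ih, hc.1]
        have := hc.2
        unfold natFlip
        split_ifs <;> omega
      · have h' : ¬ ∃ j ∈ a :: l, p (j : ℕ) ∧ ((x : ℕ) = j ∨ (x : ℕ) = n + j) := by
          rintro ⟨j, h1, h2⟩
          rcases List.mem_cons.1 h1 with rfl | h1
          · exact hc h2
          · exact h ⟨j, h1, h2⟩
        simp only [h', if_false, ih]
        split_ifs with hp h1 h2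
        · exact absurd ⟨hp, Or.inl h1⟩ hc
        · exact absurd ⟨hp, Or.inr h2⟩ hc
        · rfl
        · rfl

theorem prod_val' (n : ℕ) (p : ℕ → Prop) [DecidablePred p] (x : Fin (2 * n)) :
    ((((List.finRange n).map (fun j : Fin n => if p (j : ℕ) then tw n j else 1)).prod x :
      Fin (2 * n)) : ℕ) =
      if (x : ℕ) < n then (if p x then n + x else x) else if p (x - n) then x - n else x := by
  rw [prod_val n p _ (List.nodup_finRange n)]
  have hx := x.isLt
  unfold natFlip
  by_cases h : (x : ℕ) < n
  · rw [if_pos h, if_pos h]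
    refine if_congr ⟨?_, fun hp => ⟨⟨x, h⟩, List.mem_finRange _, hp, Or.inl rfl⟩⟩ rfl rfl
    rintro ⟨j, -, hp, hj | hj⟩
    · rwa [hj]
    · omega
  · rw [if_neg h, if_neg h]
    refine if_congr ⟨?_, fun hp => ⟨⟨x - n, by omega⟩, List.mem_finRange _, hp,
      Or.inr (by simp only []; omega)⟩⟩ rfl rfl
    rintro ⟨j, -, hp, hj | hj⟩
    · have := j.isLt
      omega
    · rwa [hj, Nat.add_sub_cancel_left]

theorem L1_val (n : ℕ) (i : Fin (n - 1)) (x : Fin (2 * n)) :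
    (linL1Gen n i x : ℕ) = if (x : ℕ) = i then n + i + 1 else if (x : ℕ) = i + 1 then (i : ℕ)
      else if (x : ℕ) = n + i then i + 1 else if (x : ℕ) = n + i + 1 then n + i else x := by
  have hi := i.isLt
  unfold linL1Gen cyc4
  simp only [Equiv.Perm.mul_apply, Equiv.swap_apply_def, Fin.ext_iff]
  split_ifs <;> simp_all <;> omega

theorem L2_val (n : ℕ) (i : Fin (n - 1)) (x : Fin (2 * n)) :
    (linL2Gen n i x : ℕ) = natGen n i x := by
  have hi := i.isLt
  have hx := x.isLt
  have h1 := prod_val' n (fun j => (i : ℕ) + 2 ≤ j) x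
  have h2 := L1_val n i (highTw n i x)
  have h3 := prod_val' n (fun j => j < (i : ℕ)) (linL1Gen n i (highTw n i x))
  change ((highTw n i x : Fin (2 * n)) : ℕ) = _ at h1
  change ((lowTw n i (linL1Gen n i (highTw n i x)) : Fin (2 * n)) : ℕ) = _ at h3
  change ((lowTw n i (linL1Gen n i (highTw n i x)) : Fin (2 * n)) : ℕ) = _
  generalize lowTw n i (linL1Gen n i (highTw n i x)) = c at *
  generalize linL1Gen n i (highTw n i x) = b at *
  generalize highTw n i x = a at *
  unfold natGen
  grind (splits := 40)

theorem natGen_comm (n i j x : ℕ) (hi : i < n - 1) (hj : j < n - 1) (hx : x < 2 * n)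
    (h : i + 2 ≤ j) : natGen n i (natGen n j x) = natGen n j (natGen n i x) := by
  unfold natGen
  grind (splits := 40)

theorem natGen_braid (n i x : ℕ) (hi : i + 1 < n - 1) (hx : x < 2 * n) :
    natGen n i (natGen n (i + 1) (natGen n i x)) =
      natGen n (i + 1) (natGen n i (natGen n (i + 1) x)) := by
  unfold natGen
  grind (splits := 40)

theorem L2_rels (n : ℕ) : ∀ r ∈ braidRels n, FreeGroup.lift (linL2Gen n) r = 1 := by
  rintro r (⟨i, j, h, rfl⟩ | ⟨i, j, h, rfl⟩)
  · rw [map_mul, map_inv, mul_inv_eq_one]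
    simp only [map_mul, FreeGroup.lift_apply_of]
    ext x
    simp only [Equiv.Perm.mul_apply, L2_val]
    rcases h with h | h
    · exact natGen_comm n i j x i.isLt j.isLt x.isLt h
    · exact (natGen_comm n j i x j.isLt i.isLt x.isLt h).symm
  · rw [map_mul, map_inv, mul_inv_eq_one]
    simp only [map_mul, FreeGroup.lift_apply_of]
    ext x
    simp only [Equiv.Perm.mul_apply, L2_val, h]
    exact natGen_braid n i x (h ▸ j.isLt) x.isLt

theorem exists_to_zero (n : ℕ) (hn : 7 ≤ n) (ρ : BraidGroup n →* Equiv.Perm (Fin (2 * n)))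
    (hρ : ∀ i, ρ (σ i) = linL2Gen n i) (x : Fin (2 * n)) :
    ∃ g, ρ g x = ⟨0, by omega⟩ := by
  have low : ∀ (k : ℕ) (hk : k < n), ∃ g, ρ g ⟨k, by omega⟩ = ⟨0, by omega⟩ := by
    intro k
    induction k with
    | zero => exact fun _ => ⟨1, by simp⟩
    | succ k ih =>
      intro hk
      obtain ⟨g, hg⟩ := ih (by omega)
      refine ⟨g * σ ⟨k, by omega⟩, ?_⟩
      rw [map_mul, Equiv.Perm.mul_apply, hρ, ← hg]
      congr 1
      apply Fin.ext
      rw [L2_val]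
      simp [natGen]
  have high : ∀ (k : ℕ) (hk : k < n), ∃ g, ρ g ⟨n + k, by omega⟩ = ⟨0, by omega⟩ := by
    intro k
    induction k with
    | zero =>
      intro _
      obtain ⟨g, hg⟩ := low 1 (by omega)
      refine ⟨g * σ ⟨0, by omega⟩, ?_⟩
      rw [map_mul, Equiv.Perm.mul_apply, hρ, ← hg]
      congr 1
      apply Fin.ext
      rw [L2_val]
      simp only [natGen]
      split_ifs <;> omega
    | succ k ih =>
      intro hk
      obtain ⟨g, hg⟩ := ih (by omega)
      refine ⟨g * σ ⟨k, by omega⟩, ?_⟩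
      rw [map_mul, Equiv.Perm.mul_apply, hρ, ← hg]
      congr 1
      apply Fin.ext
      rw [L2_val]
      simp only [natGen]
      split_ifs <;> omega
  by_cases h : (x : ℕ) < n
  · exact low x h
  · obtain ⟨g, hg⟩ := high (x - n) (by omega)
    refine ⟨g, ?_⟩
    rw [← hg]
    congr 1
    apply Fin.ext
    simp only []
    omega

/-- Lin. For `n ≥ 7`, the assignment
`σ_i ↦ ∏_{j=1}^{i-1}(j, n+j) · (i, n+i+1, n+i, i+1) · ∏_{j=i+2}^{n}(j, n+j)` induces a
well-defined group homomorphism `ρ_{L2} : B_n → Sym_{2n}`, and `ρ_{L2}` is transitive. -/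
theorem linL2_exists_and_transitive (n : ℕ) (hn : 7 ≤ n) :
    ∃ ρL2 : BraidGroup n →* Equiv.Perm (Fin (2 * n)),
      (∀ i : Fin (n - 1), ρL2 (σ i) = linL2Gen n i) ∧ IsTransitiveHom ρL2 := by
  have hρ : ∀ i : Fin (n - 1),
      (PresentedGroup.toGroup (L2_rels n) : BraidGroup n →* _) (σ i) = linL2Gen n i :=
    fun i => PresentedGroup.toGroup.of (L2_rels n)
  refine ⟨PresentedGroup.toGroup (L2_rels n), hρ, fun x y => ?_⟩
  obtain ⟨g, hg⟩ := exists_to_zero n hn _ hρ x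
  obtain ⟨h, hh⟩ := exists_to_zero n hn _ hρ y
  refine ⟨h⁻¹ * g, ?_⟩
  rw [map_mul, Equiv.Perm.mul_apply, hg, map_inv, Equiv.Perm.inv_eq_iff_eq, hh]
end

section
/- Let n ≥ 7 and let n+1 ≤ k ≤ 2n−1. Then every transitive homomorphism ψ : B_n → Sym_k is cyclic, i.e. ψ(σ_1) = ψ(σ_2) = … = ψ(σ_{n−1}). -/
section BraidProof
open Equiv


structure Br {G : Type*} [Group G] (g : ℕ) (s : ℕ → G) : Prop where
  comm : ∀ i j, i + 2 ≤ j → s i * s j = s j * s i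
  braid : ∀ i, i + 1 < g → s i * s (i+1) * s i = s (i+1) * s i * s (i+1)

theorem braid_comm {G : Type*} [Group G] {a b : G} (h : a * b * a = b * a * b)
    (hc : a * b = b * a) : a = b := by
  rw [hc, mul_assoc, mul_assoc] at h
  exact mul_left_cancel (mul_left_cancel (h.trans (by rw [hc])))

theorem L0 {G : Type*} [Group G] {a b d : G} (h : a * b * a = b * a * b)
    (had : a * d = d * a) (hbd : b * d = d * b)
    (hc : (a * d⁻¹) * (b * d⁻¹) = (b * d⁻¹) * (a * d⁻¹)) : a = b := by
  apply braid_comm h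
  have h1 : Commute a d := had
  have h2 : Commute b d := hbd
  have e1 : (a * d⁻¹) * (b * d⁻¹) = a * b * (d⁻¹ * d⁻¹) := by
    rw [mul_assoc, ← mul_assoc d⁻¹, ← (h2.inv_right).eq]; group
  have e2 : (b * d⁻¹) * (a * d⁻¹) = b * a * (d⁻¹ * d⁻¹) := by
    rw [mul_assoc, ← mul_assoc d⁻¹, ← (h1.inv_right).eq]; group
  rw [e1, e2] at hc
  exact mul_right_cancel hc

namespace Br
variable {G H : Type*} [Group G] [Group H] {g : ℕ} {s : ℕ → G}

theorem map (h : Br g s) (f : G →* H) : Br g (fun i => f (s i)) :=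
  ⟨fun i j hij => by simp only [← map_mul, h.comm i j hij],
   fun i hi => by simp only [← map_mul, h.braid i hi]⟩

theorem mono (h : Br g s) {g' : ℕ} (hg : g' ≤ g) : Br g' s :=
  ⟨h.comm, fun i hi => h.braid i (by omega)⟩

theorem shift (h : Br g s) (d : ℕ) : Br (g - d) (fun i => s (i + d)) :=
  ⟨fun i j hij => h.comm _ _ (by omega), fun i hi => by
    have := h.braid (i+d) (by omega)
    simpa [add_right_comm] using this⟩

theorem rev (h : Br g s) : Br g (fun i => if i < g then s (g - 1 - i) else 1) := by
  constructor
  · intro i j hij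
    by_cases hj : j < g
    · have hi : i < g := by omega
      simp only [hi, hj, if_true]
      exact (h.comm _ _ (by omega)).symm
    · simp [hj]
  · intro i hi
    have h1 : i < g := by omega
    simp only [hi, h1, if_true]
    have := h.braid (g - 1 - (i+1)) (by omega)
    rw [show g - 1 - (i+1) + 1 = g - 1 - i by omega] at this
    exact this.symm

theorem eq_up (h : Br g s) {i : ℕ} (hi : i + 2 < g) (e : s i = s (i+1)) : s (i+1) = s (i+2) := by
  apply braid_comm (h.braid (i+1) (by omega))
  rw [← e]; exact h.comm _ _ (by omega)

theorem eq_down (h : Br g s) {i : ℕ} (hi : i + 2 < g) (e : s (i+1) = s (i+2)) : s i = s (i+1) := by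
  apply braid_comm (h.braid i (by omega))
  rw [e]; exact h.comm _ _ (by omega)

theorem cyc (h : Br g s) {i : ℕ} (hi : i + 1 < g) (e : s i = s (i+1)) :
    ∀ j < g, s j = s 0 := by
  have h0 : s 0 = s 1 := by
    induction i with
    | zero => exact e
    | succ i ih => exact ih (by omega) (h.eq_down (by omega) e)
  have hs : ∀ j, j + 1 < g → s j = s (j+1) := by
    intro j
    induction j with
    | zero => intro _; exact h0
    | succ j ih => intro hj; exact h.eq_up (by omega) (ih (by omega))
  intro j
  induction j with
  | zero => intro _; rfl
  | succ j ih => intro hj; rw [← hs j hj]; exact ih (by omega)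

theorem cyc' (h : Br g s) {i : ℕ} (hi : i + 1 < g) (e : s i = s (i+1)) :
    ∀ j < g, ∀ l < g, s j = s l := fun j hj l hl => (h.cyc hi e j hj).trans (h.cyc hi e l hl).symm

/-- conjugation step -/
theorem conj (h : Br g s) {i : ℕ} (hi : i + 1 < g) :
    (s i * s (i+1)) * s i * (s i * s (i+1))⁻¹ = s (i+1) := by
  have := h.braid i hi
  rw [mul_inv_eq_iff_eq_mul, this]; group

theorem exists_conj (h : Br g s) {i : ℕ} (hi : i < g) : ∃ x : G, x * s 0 * x⁻¹ = s i := by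
  induction i with
  | zero => exact ⟨1, by simp⟩
  | succ i ih =>
    obtain ⟨x, hx⟩ := ih (by omega)
    refine ⟨s i * s (i+1) * x, ?_⟩
    calc _ = s i * s (i+1) * (x * s 0 * x⁻¹) * (s i * s (i+1))⁻¹ := by group
      _ = _ := by rw [hx]; exact h.conj hi

end Br

def FF (g : ℕ) : Prop := ∀ (X : Type) [Finite X], Nat.card X ≤ g → ∀ s : ℕ → Perm X, Br g s →
  ∀ i < g, ∀ j < g, s i = s j

theorem L1 {g : ℕ} (hg : 4 ≤ g) (hF : FF g) {X : Type} [Finite X] (a : Perm X) (s : ℕ → Perm X)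
    (hs : Br g s) (hc : ∀ i, a * s i = s i * a)
    (hQ : Nat.card (Quotient (Perm.SameCycle.setoid a)) ≤ g) :
    ∀ i < g, ∀ j < g, s i = s j := by
  have hrel : ∀ i, ∀ x y : X, (Perm.SameCycle.setoid a) x y ↔
      (Perm.SameCycle.setoid a) (s i x) (s i y) := by
    intro i x y
    change a.SameCycle x y ↔ a.SameCycle (s i x) (s i y)
    have hcz : ∀ m : ℤ, ∀ z, (a ^ m) (s i z) = s i ((a ^ m) z) := by
      intro m z
      have : Commute (a ^ m) (s i) := (show Commute a (s i) from hc i).zpow_left m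
      exact congrArg (fun p : Perm X => p z) this.eq
    constructor
    · rintro ⟨m, hm⟩
      exact ⟨m, by rw [hcz, hm]⟩
    · rintro ⟨m, hm⟩
      exact ⟨m, by rw [hcz] at hm; exact (s i).injective hm⟩
  let q : ℕ → Perm (Quotient (Perm.SameCycle.setoid a)) := fun i => Quotient.congr (s i) (hrel i)
  have hq : ∀ i x, q i (Quotient.mk _ x) = Quotient.mk _ (s i x) := fun i x => rfl
  have hBq : Br g q := by
    constructor
    · intro i j hij
      ext z
      induction z using Quotient.inductionOn with | _ z =>
      simp only [Perm.mul_apply, hq]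
      have := congrArg (fun p : Perm X => p z) (hs.comm i j hij)
      simp only [Perm.mul_apply] at this
      rw [this]
    · intro i hi
      ext z
      induction z using Quotient.inductionOn with | _ z =>
      simp only [Perm.mul_apply, hq]
      have := congrArg (fun p : Perm X => p z) (hs.braid i hi)
      simp only [Perm.mul_apply] at this
      rw [this]
  have hqe := hF _ hQ q hBq
  -- `s i * (s 3)⁻¹` preserves each cycle
  have key : ∀ i < g, ∀ x, ∃ m : ℤ, (s i * (s 3)⁻¹) x = (a ^ m) x := by
    intro i hi x
    have h1 : q i (Quotient.mk _ ((s 3)⁻¹ x)) = q 3 (Quotient.mk _ ((s 3)⁻¹ x)) := by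
      rw [hqe i hi 3 (by omega)]
    rw [hq, hq] at h1
    have h2 : a.SameCycle (s i ((s 3)⁻¹ x)) (s 3 ((s 3)⁻¹ x)) := Quotient.exact h1
    obtain ⟨m, hm⟩ := h2.symm
    exact ⟨m, by simpa using hm.symm⟩
  have hcom : ∀ i, Commute a (s i * (s 3)⁻¹) := fun i =>
    (show Commute a (s i) from hc i).mul_right (show Commute a (s 3) from hc 3).inv_right
  have h01 : s 0 = s 1 := by
    apply L0 (d := s 3) (hs.braid 0 (by omega)) (hs.comm 0 3 (by omega)) (hs.comm 1 3 (by omega))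
    ext x
    obtain ⟨m, hm⟩ := key 0 (by omega) x
    obtain ⟨l, hl⟩ := key 1 (by omega) x
    have c0 := congrArg (fun p : Perm X => p x) ((hcom 0).zpow_left l).eq
    have c1 := congrArg (fun p : Perm X => p x) ((hcom 1).zpow_left m).eq
    rw [Perm.mul_apply (s 0 * (s 3)⁻¹), Perm.mul_apply (s 1 * (s 3)⁻¹), hm, hl]
    change (a ^ l) ((s 0 * (s 3)⁻¹) x) = (s 0 * (s 3)⁻¹) ((a ^ l) x) at c0
    change (a ^ m) ((s 1 * (s 3)⁻¹) x) = (s 1 * (s 3)⁻¹) ((a ^ m) x) at c1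
    rw [← c0, ← c1, hm, hl, ← Perm.mul_apply, ← Perm.mul_apply, ← zpow_add, ← zpow_add, add_comm]
  exact hs.cyc' (by omega) h01

theorem card_cycles {X : Type} [Finite X] (a : Perm X) (c : ℕ)
    (h : ∀ x, ∀ m, 0 < m → m < c → (a ^ m) x ≠ x) :
    c * Nat.card (Quotient (Perm.SameCycle.setoid a)) ≤ Nat.card X := by
  let f : Fin c × Quotient (Perm.SameCycle.setoid a) → X := fun p => (a ^ (p.1 : ℕ)) p.2.out
  have hf : Function.Injective f := by
    have main : ∀ m l : ℕ, m ≤ l → l < c → ∀ x, (a ^ m) x = (a ^ l) x → m = l := by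
      intro m l hml hl x hx
      by_contra hne
      apply h x (l - m) (by omega) (by omega)
      have : (a ^ l) x = (a ^ m) ((a ^ (l - m)) x) := by
        rw [← Perm.mul_apply, ← pow_add]; congr 2; omega
      rw [this] at hx
      exact ((a ^ m).injective hx).symm
    rintro ⟨m, p⟩ ⟨l, q⟩ hpq
    simp only [f] at hpq
    have hpq' : p = q := by
      rw [← Quotient.out_eq p, ← Quotient.out_eq q]
      apply Quotient.sound
      change a.SameCycle _ _
      refine ⟨(-(l:ℤ) + m), ?_⟩
      rw [zpow_add, Perm.mul_apply, zpow_natCast, hpq, ← zpow_natCast, ← Perm.mul_apply, ← zpow_add]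
      simp
    subst hpq'
    congr 1
    rcases le_total (m : ℕ) l with hl | hl
    · exact Fin.ext (main m l hl l.2 _ hpq)
    · exact Fin.ext (main l m hl m.2 _ hpq.symm).symm
  have := Nat.card_le_card_of_injective f hf
  simpa using this

/-- Main local lemma: on an invariant set with few cycles of `a`, the generators agree. -/
theorem L1' {g : ℕ} (hg : 4 ≤ g) (hF : FF g) {X : Type} [Finite X] (a : Perm X) (s : ℕ → Perm X)
    (hs : Br g s) (hc : ∀ i, a * s i = s i * a) (Y : X → Prop) (ha : ∀ x, Y (a x) ↔ Y x)
    (hY : ∀ i x, Y (s i x) ↔ Y x) (c : ℕ) (h : ∀ x, Y x → ∀ m, 0 < m → m < c → (a ^ m) x ≠ x)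
    (hcard : Nat.card {x // Y x} < c * (g + 1)) :
    ∀ i < g, ∀ j < g, ∀ x, Y x → s i x = s j x := by
  let a' : Perm {x // Y x} := a.subtypePerm ha
  let s' : ℕ → Perm {x // Y x} := fun i => (s i).subtypePerm (hY i)
  have pt : ∀ {p q : Perm X}, p = q → ∀ x, p x = q x := fun h x => by rw [h]
  have hs' : Br g s' := by
    constructor
    · intro i j hij; ext x
      exact pt (hs.comm i j hij) x
    · intro i hi; ext x
      exact pt (hs.braid i hi) x
  have hap : ∀ m : ℕ, ∀ x, (((a' ^ m) x : {x // Y x}) : X) = (a ^ m) x := by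
    intro m
    induction m with
    | zero => intro x; rfl
    | succ m ih => intro x; rw [pow_succ, pow_succ, Perm.mul_apply, Perm.mul_apply, ih]; rfl
  have hcc := card_cycles a' c (fun x m h0 h1 he => h x x.2 m h0 h1 (by
    rw [← hap, he]))
  have hQ : Nat.card (Quotient (Perm.SameCycle.setoid a')) ≤ g := by
    by_contra hlt
    have : c * (g + 1) ≤ c * Nat.card (Quotient (Perm.SameCycle.setoid a')) :=
      Nat.mul_le_mul_left _ (by omega)
    omega
  have := L1 hg hF a' s' hs' (fun i => by ext x; exact pt (hc i) x) hQ
  intro i hi j hj x hx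
  have h2 := congrArg (fun p : Perm {x // Y x} => ((p ⟨x, hx⟩ : {x // Y x}) : X)) (this i hi j hj)
  exact h2


theorem dec4 : ∀ a b : Perm (Fin 4), a ≠ 1 → a * b = b * a → ∀ c : Perm (Fin 4), a * c = c * a →
   b * c * b = c * b * c → b = c := by decide +kernel
theorem dec5a : ∀ a : Perm (Fin 5), ¬ a.support.card ≤ 2 → ∀ b : Perm (Fin 5), a * b = b * a → ∀ c : Perm (Fin 5), a * c = c * a →
   b * c * b = c * b * c → b = c := by decide +kernel
theorem dec5b : ∀ a : Perm (Fin 5), a.support.card ≤ 2 → ∀ b : Perm (Fin 5), b.support.card ≤ 2 →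
    a * b = b * a → a = b ∨ Disjoint a.support b.support := by decide +kernel

theorem FF_of {g : ℕ} (h : ∀ s : ℕ → Perm (Fin g), Br g s → ∀ i < g, ∀ j < g, s i = s j) : FF g := by
  intro X _ hX s hs i hi j hj
  have e := Finite.equivFin X
  let ι : X ↪ Fin g := e.toEmbedding.trans (Fin.castLEEmb hX)
  have := h _ (hs.map (Perm.viaEmbeddingHom ι)) i hi j hj
  exact Perm.viaEmbeddingHom_injective ι this

theorem FF4 : FF 4 := by
  apply FF_of
  intro s hs
  by_cases h1 : s 0 = 1
  · have : ∀ j < 4, s j = 1 := by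
      intro j hj
      obtain ⟨x, hx⟩ := hs.exists_conj hj
      rw [← hx, h1]; simp
    intro i hi j hj
    rw [this i hi, this j hj]
  · exact hs.cyc' (i := 2) (by omega) (dec4 (s 0) (s 2) h1 (hs.comm 0 2 (by omega)) (s 3)
      (hs.comm 0 3 (by omega)) (hs.braid 2 (by omega)))

theorem Br.cyc_of_02 {G : Type*} [Group G] {g : ℕ} {s : ℕ → G} (hs : Br g s) (hg : 4 ≤ g)
    {i : ℕ} (hi : i + 3 < g) (e : s i = s (i+2)) : ∀ i < g, ∀ j < g, s i = s j := by
  apply hs.cyc' (i := i+2) (by omega)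
  apply braid_comm (hs.braid (i+2) (by omega))
  rw [← e]; exact hs.comm _ _ (by omega)

theorem FF5 : FF 5 := by
  apply FF_of
  intro s hs
  by_cases h1 : (s 0).support.card ≤ 2
  · have hsup : ∀ j < 5, (s j).support.card = (s 0).support.card := by
      intro j hj
      obtain ⟨x, hx⟩ := hs.exists_conj hj
      rw [← hx, Perm.card_support_conj]
    rcases dec5b (s 0) h1 (s 2) (by rw [hsup 2 (by omega)]; exact h1) (hs.comm 0 2 (by omega)) with h | h02
    · exact hs.cyc_of_02 (by omega) (by omega) h
    rcases dec5b (s 0) h1 (s 4) (by rw [hsup 4 (by omega)]; exact h1) (hs.comm 0 4 (by omega)) with h | h04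
    · apply hs.cyc' (i := 2) (by omega)
      have b1 := hs.braid 3 (by omega)
      have c1 := hs.comm 0 3 (by omega)
      rw [h] at c1
      have h34 : s 3 = s 4 := braid_comm b1 c1.symm
      exact hs.eq_down (i := 2) (by omega) h34
    rcases dec5b (s 2) (by rw [hsup 2 (by omega)]; exact h1) (s 4) (by rw [hsup 4 (by omega)]; exact h1) (hs.comm 2 4 (by omega)) with h | h24
    · apply hs.cyc' (i := 0) (by omega)
      have c1 := hs.comm 1 4 (by omega)
      rw [← h] at c1
      exact hs.eq_down (i := 0) (by omega) (braid_comm (hs.braid 1 (by omega)) c1)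
    have hu : ((s 0).support ∪ (s 2).support ∪ (s 4).support).card ≤ 5 := by
      simpa using Finset.card_le_univ ((s 0).support ∪ (s 2).support ∪ (s 4).support)
    rw [Finset.card_union_of_disjoint (Finset.disjoint_union_left.2 ⟨h04, h24⟩),
      Finset.card_union_of_disjoint h02, hsup 2 (by omega), hsup 4 (by omega)] at hu
    have h0 : s 0 = 1 := by
      rw [← Perm.card_support_le_one]; omega
    have : ∀ j < 5, s j = 1 := by
      intro j hj
      obtain ⟨x, hx⟩ := hs.exists_conj hj
      rw [← hx, h0]; simp
    intro i hi j hj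
    rw [this i hi, this j hj]
  · exact hs.cyc' (i := 2) (by omega) (dec5a (s 0) h1 (s 2) (hs.comm 0 2 (by omega)) (s 3)
      (hs.comm 0 3 (by omega)) (hs.braid 2 (by omega)))

theorem FF_step {g : ℕ} (hg : 6 ≤ g) (hF : FF (g - 2)) : FF g := by
  classical
  intro X _ hX s hs
  have := Fintype.ofFinite X
  have pt : ∀ {p q : Perm X}, p = q → ∀ x, p x = q x := fun h x => by rw [h]
  have hs2 := hs.shift 2
  have hc : ∀ i, s 0 * s (i+2) = s (i+2) * s 0 := fun i => hs.comm _ _ (by omega)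
  have hc' : ∀ i x, s 0 (s (i+2) x) = s (i+2) (s 0 x) := fun i => pt (hc i)
  have hN : Nat.card {x // s 0 x ≠ x} + Nat.card {x // ¬ s 0 x ≠ x} = Nat.card X := by
    rw [← Nat.card_sum]; exact Nat.card_congr (Equiv.sumCompl _)
  have hm := L1' (by omega) hF (s 0) _ hs2 hc (fun x => s 0 x ≠ x) (by simp)
    (fun i x => by simp only [hc', ne_eq, EmbeddingLike.apply_eq_iff_eq]) 2
    (fun x hx m h1 h2 => by
      have : m = 1 := by omega
      subst this; simpa using hx) (by omega)
  by_cases h1 : Nat.card {x // ¬ s 0 x ≠ x} < g - 1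
  · have hf := L1' (by omega) hF (s 0) _ hs2 hc (fun x => ¬ s 0 x ≠ x) (by simp)
      (fun i x => by simp only [hc', ne_eq, EmbeddingLike.apply_eq_iff_eq]) 1
      (fun x hx m h1 h2 => by omega) (by omega)
    apply hs.cyc' (i := 2) (by omega)
    ext x
    by_cases hx : s 0 x ≠ x
    · exact hm 0 (by omega) 1 (by omega) x hx
    · exact hf 0 (by omega) 1 (by omega) x hx
  · have h0 : s 0 = 1 := by
      rw [← Perm.card_support_le_one]
      have : (s 0).support.card = Nat.card {x // s 0 x ≠ x} := by
        rw [Nat.card_eq_fintype_card, Fintype.card_subtype]; rfl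
      omega
    have : ∀ j < g, s j = 1 := by
      intro j hj
      obtain ⟨x, hx⟩ := hs.exists_conj hj
      rw [← hx, h0]; simp
    intro i hi j hj
    rw [this i hi, this j hj]

theorem FF_all : ∀ g, 4 ≤ g → FF g := by
  intro g
  induction g using Nat.strong_induction_on with
  | _ g ih =>
    intro hg
    rcases (by omega : g = 4 ∨ g = 5 ∨ 6 ≤ g) with h | h | h
    · subst h; exact FF4
    · subst h; exact FF5
    · exact FF_step h (ih (g-2) (by omega) (by omega))

theorem pt {X : Type} {p q : Perm X} (h : p = q) (x : X) : p x = q x := by rw [h]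



theorem caseA_agree {g : ℕ} (hg : 6 ≤ g) {X : Type} [Finite X] (hk : Nat.card X ≤ 2 * g + 1)
    {s : ℕ → Perm X} (hs : Br g s) (hfix : g - 1 ≤ Nat.card {x // ¬ s 0 x ≠ x}) :
    ∀ i < g - 2, ∀ j < g - 2, ∀ x, s 0 x ≠ x → s (i+2) x = s (j+2) x := by
  classical
  have hc : ∀ i, s 0 * s (i+2) = s (i+2) * s 0 := fun i => hs.comm _ _ (by omega)
  have hc' : ∀ i x, s 0 (s (i+2) x) = s (i+2) (s 0 x) := fun i => pt (hc i)
  have hN : Nat.card {x // s 0 x ≠ x} + Nat.card {x // ¬ s 0 x ≠ x} = Nat.card X := by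
    rw [← Nat.card_sum]; exact Nat.card_congr (Equiv.sumCompl _)
  exact L1' (by omega) (FF_all (g-2) (by omega)) (s 0) _ (hs.shift 2) hc (fun x => s 0 x ≠ x) (by simp)
    (fun i x => by simp only [hc', ne_eq, EmbeddingLike.apply_eq_iff_eq]) 2
    (fun x hx m h1 h2 => by
      have : m = 1 := by omega
      subst this; simpa using hx) (by omega)

theorem caseB_agree {g : ℕ} (hg : 6 ≤ g) {X : Type} [Finite X] (hk : Nat.card X ≤ 2 * g + 1)
    {s : ℕ → Perm X} (hs : Br g s) (hfix : 2 * g - 2 ≤ Nat.card {x // s 0 x ≠ x ∧ s 0 (s 0 x) = x}) :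
    ∀ i < g - 2, ∀ j < g - 2, ∀ x, ¬ (s 0 x ≠ x ∧ s 0 (s 0 x) = x) → s (i+2) x = s (j+2) x := by
  classical
  have hc : ∀ i, s 0 * s (i+2) = s (i+2) * s 0 := fun i => hs.comm _ _ (by omega)
  have hc' : ∀ i x, s 0 (s (i+2) x) = s (i+2) (s 0 x) := fun i => pt (hc i)
  have hN : Nat.card {x // s 0 x ≠ x ∧ s 0 (s 0 x) = x} +
      Nat.card {x // ¬ (s 0 x ≠ x ∧ s 0 (s 0 x) = x)} = Nat.card X := by
    rw [← Nat.card_sum]; exact Nat.card_congr (Equiv.sumCompl _)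
  exact L1' (by omega) (FF_all (g-2) (by omega)) (s 0) _ (hs.shift 2) hc
    (fun x => ¬ (s 0 x ≠ x ∧ s 0 (s 0 x) = x)) (by simp)
    (fun i x => by simp only [hc', ne_eq, EmbeddingLike.apply_eq_iff_eq]) 1
    (fun x hx m h1 h2 => by omega) (by omega)

theorem trichotomy {g : ℕ} (hg : 6 ≤ g) {X : Type} [Finite X] (hk : Nat.card X ≤ 2 * g + 1)
    {s : ℕ → Perm X} (hs : Br g s) :
    (∀ i < g, ∀ j < g, s i = s j) ∨ g - 1 ≤ Nat.card {x // ¬ s 0 x ≠ x} ∨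
      2 * g - 2 ≤ Nat.card {x // s 0 x ≠ x ∧ s 0 (s 0 x) = x} := by
  classical
  by_contra hcon
  push Not at hcon
  obtain ⟨hnc, h1, h2⟩ := hcon
  have hc : ∀ i, s 0 * s (i+2) = s (i+2) * s 0 := fun i => hs.comm _ _ (by omega)
  have hc' : ∀ i x, s 0 (s (i+2) x) = s (i+2) (s 0 x) := fun i => pt (hc i)
  have hF := FF_all (g-2) (by omega)
  have a1 := L1' (by omega) hF (s 0) _ (hs.shift 2) hc (fun x => s 0 x = x) (by simp)
    (fun i x => by simp only [hc', EmbeddingLike.apply_eq_iff_eq]) 1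
    (fun x hx m h1 h2 => by omega) (by omega)
  have a2 := L1' (by omega) hF (s 0) _ (hs.shift 2) hc
    (fun x => s 0 x ≠ x ∧ s 0 (s 0 x) = x) (by simp)
    (fun i x => by simp only [hc', ne_eq, EmbeddingLike.apply_eq_iff_eq]) 2
    (fun x hx m h1 h2 => by
      have : m = 1 := by omega
      subst this; simpa using hx.1) (by omega)
  have a3 := L1' (by omega) hF (s 0) _ (hs.shift 2) hc
    (fun x => s 0 (s 0 x) ≠ x) (by simp)
    (fun i x => by simp only [hc', ne_eq, EmbeddingLike.apply_eq_iff_eq]) 3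
    (fun x hx m h1 h2 => by
      rcases (by omega : m = 1 ∨ m = 2) with h | h
      · subst h
        intro h3
        rw [pow_one] at h3
        apply hx; rw [h3, h3]
      · subst h; simpa [pow_two] using hx)
    (by have := Finite.card_subtype_le (fun x => s 0 (s 0 x) ≠ x); omega)
  obtain ⟨i, hi, j, hj, hij⟩ := hnc
  apply hij
  apply hs.cyc' (i := 2) (by omega) _ i hi j hj
  ext x
  by_cases hx : s 0 x = x
  · exact a1 0 (by omega) 1 (by omega) x hx
  · by_cases hx2 : s 0 (s 0 x) = x
    · exact a2 0 (by omega) 1 (by omega) x ⟨hx, hx2⟩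
    · exact a3 0 (by omega) 1 (by omega) x hx2

/-- equivariant predicates -/
structure Eqv {X : Type} (U : Perm X → X → Prop) : Prop where
  conj : ∀ (h p : Perm X) (x : X), U (h * p * h⁻¹) (h x) ↔ U p x
  loc : ∀ (p q : Perm X) (x : X), p x = q x → p (p x) = q (q x) → (U p x ↔ U q x)

theorem Eqv.comm {X : Type} {U : Perm X → X → Prop} (hU : Eqv U) {p h : Perm X}
    (hc : h * p = p * h) (x : X) : U p (h x) ↔ U p x := by
  have := hU.conj h p x
  rwa [hc, mul_assoc, mul_inv_cancel, mul_one] at this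

def TransS {X : Type} (g : ℕ) (s : ℕ → Perm X) : Prop :=
  ∀ Z : X → Prop, (∃ x, Z x) → (∀ i < g, ∀ x, Z x → Z (s i x)) → ∀ x, Z x

theorem disjoint_step {g : ℕ} {X : Type} {s : ℕ → Perm X} (hs : Br g s)
    {U : Perm X → X → Prop} (hU : Eqv U) (h02 : ∀ x, U (s 0) x → ¬ U (s 2) x) :
    ∀ i j, i + 2 ≤ j → j < g → ∀ x, U (s i) x → ¬ U (s j) x := by
  have h0 : ∀ j, j + 2 < g → ∀ x, U (s 0) x → ¬ U (s (j+2)) x := by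
    intro j
    induction j with
    | zero => intro _; exact h02
    | succ j ih =>
      intro hj x hx hx'
      let h := s (j+2) * s (j+2+1)
      have hc := hs.conj (i := j+2) (by omega)
      apply ih (by omega) (h⁻¹ x)
      · rw [hU.comm _ x]
        · exact hx
        · exact (Commute.inv_left (Commute.mul_left (hs.comm 0 (j+2) (by omega)).symm
            (hs.comm 0 (j+2+1) (by omega)).symm)).eq
      · rw [← hU.conj h, hc, ← Perm.mul_apply, mul_inv_cancel]
        rw [show j + 1 + 2 = j + 2 + 1 by omega] at hx'
        exact hx'
  intro i
  induction i with
  | zero =>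
    intro j hj hjg
    have := h0 (j - 2) (by omega)
    rwa [show j - 2 + 2 = j by omega] at this
  | succ i ih =>
    intro j hj hjg x hx hx'
    let h := s i * s (i+1)
    have hc := hs.conj (i := i) (by omega)
    apply ih j (by omega) hjg (h⁻¹ x)
    · rw [← hU.conj h, hc, ← Perm.mul_apply, mul_inv_cancel]
      exact hx
    · rw [hU.comm _ x]
      · exact hx'
      · exact (Commute.inv_left (Commute.mul_left (hs.comm i j (by omega))
            (hs.comm (i+1) j (by omega)))).eq

theorem common {g : ℕ} (hg : 6 ≤ g) {X : Type} {s : ℕ → Perm X} (hs : Br g s) (ht : TransS g s)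
    {U : Perm X → X → Prop} (hU : Eqv U)
    (hag : ∀ i < g - 2, ∀ j < g - 2, ∀ x, U (s 0) x → s (i+2) x = s (j+2) x)
    (hag' : ∀ i < g - 2, ∀ j < g - 2, ∀ x, U (s (g-1)) x → s i x = s j x) :
    (∀ i < g, ∀ j < g, s i = s j) ∨
      ∀ i j, i + 2 ≤ j → j < g → ∀ x, U (s i) x → ¬ U (s j) x := by
  by_cases h02 : ∀ x, U (s 0) x → ¬ U (s 2) x
  · right; exact disjoint_step hs hU h02
  · left
    push Not at h02
    obtain ⟨x0, h0, h2⟩ := h02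
    have key : ∀ x, U (s 0) x → U (s 2) x → ∀ i < g, s i x = s 0 x := by
      intro x hx hx2
      have hl : U (s (g-1)) x := by
        have e1 := hag 0 (by omega) (g-3) (by omega) x hx
        have e2 := hag 0 (by omega) (g-3) (by omega) (s 2 x)
          ((hU.comm (hs.comm 0 2 (by omega)).symm x).2 hx)
        rw [show g - 3 + 2 = g - 1 by omega, zero_add] at e1 e2
        exact (hU.loc _ _ x e1 (by rw [e2, e1])).1 hx2
      intro i hi
      by_cases h : i < g - 2
      · exact hag' i h 0 (by omega) x hl
      · have e1 := hag (i-2) (by omega) 0 (by omega) x hx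
        rw [show i - 2 + 2 = i by omega] at e1
        rw [e1]
        exact hag' 2 (by omega) 0 (by omega) x hl
    have hall := ht (fun x => U (s 0) x ∧ U (s 2) x) ⟨x0, h0, h2⟩ (by
      rintro i hi x ⟨hx, hx2⟩
      rw [key x hx hx2 i hi]
      exact ⟨(hU.comm rfl x).2 hx, (hU.comm (hs.comm 0 2 (by omega)) x).2 hx2⟩)
    intro i hi j hj
    ext x
    rw [key x (hall x).1 (hall x).2 i hi, key x (hall x).1 (hall x).2 j hj]

theorem eqvA (X : Type) : Eqv (fun (p : Perm X) x => p x ≠ x) :=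
  ⟨fun h p x => by simp, fun p q x h1 h2 => by simp [h1]⟩

theorem eqvB (X : Type) : Eqv (fun (p : Perm X) x => ¬ (p x ≠ x ∧ p (p x) = x)) :=
  ⟨fun h p x => by simp, fun p q x h1 h2 => by simp only [h2]; simp only [h1]⟩

theorem Eqv.card {X : Type} {U : Perm X → X → Prop} (hU : Eqv U) (h p : Perm X) :
    Nat.card {x // U (h * p * h⁻¹) x} = Nat.card {x // U p x} :=
  (Nat.card_congr (h.subtypeEquiv (fun x => (hU.conj h p x).symm))).symm

theorem Eqv.not {X : Type} {U : Perm X → X → Prop} (hU : Eqv U) : Eqv (fun p x => ¬ U p x) :=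
  ⟨fun h p x => not_congr (hU.conj h p x), fun p q x h1 h2 => not_congr (hU.loc p q x h1 h2)⟩

theorem Br.card_eq {g : ℕ} {X : Type} {s : ℕ → Perm X} (hs : Br g s)
    {U : Perm X → X → Prop} (hU : Eqv U) {i : ℕ} (hi : i < g) :
    Nat.card {x // U (s i) x} = Nat.card {x // U (s 0) x} := by
  obtain ⟨h, hh⟩ := hs.exists_conj hi
  rw [← hh, hU.card]

theorem caseA_disj {g : ℕ} (hg : 6 ≤ g) {X : Type} [Finite X] (hk : Nat.card X ≤ 2 * g + 1)
    {s : ℕ → Perm X} (hs : Br g s) (ht : TransS g s)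
    (hfix : g - 1 ≤ Nat.card {x // ¬ s 0 x ≠ x}) :
    (∀ i < g, ∀ j < g, s i = s j) ∨
      ∀ i j, i + 2 ≤ j → j < g → ∀ x, s i x ≠ x → ¬ s j x ≠ x := by
  refine common hg hs ht (eqvA X) (caseA_agree hg hk hs hfix) ?_
  have := caseA_agree hg hk hs.rev (by
    simp only [show 0 < g by omega, if_true, Nat.sub_zero]
    rw [hs.card_eq (eqvA X).not (by omega)]; exact hfix)
  simp only [show 0 < g by omega, if_true, Nat.sub_zero] at this
  intro i hi j hj x hx
  have h2 := this (g - 3 - i) (by omega) (g - 3 - j) (by omega) x hx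
  rw [if_pos (by omega), if_pos (by omega)] at h2
  rwa [show g - 1 - (g - 3 - i + 2) = i by omega, show g - 1 - (g - 3 - j + 2) = j by omega] at h2

theorem caseB_disj {g : ℕ} (hg : 6 ≤ g) {X : Type} [Finite X] (hk : Nat.card X ≤ 2 * g + 1)
    {s : ℕ → Perm X} (hs : Br g s) (ht : TransS g s)
    (hfix : 2 * g - 2 ≤ Nat.card {x // s 0 x ≠ x ∧ s 0 (s 0 x) = x}) :
    (∀ i < g, ∀ j < g, s i = s j) ∨
      ∀ i j, i + 2 ≤ j → j < g → ∀ x, ¬ (s i x ≠ x ∧ s i (s i x) = x) →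
        ¬ ¬ (s j x ≠ x ∧ s j (s j x) = x) := by
  refine common hg hs ht (eqvB X) (caseB_agree hg hk hs hfix) ?_
  have := caseB_agree hg hk hs.rev (by
    simp only [show 0 < g by omega, if_true, Nat.sub_zero]
    have := hs.card_eq (eqvB X).not (i := g-1) (by omega)
    simp only [not_not] at this
    rw [this]; exact hfix)
  simp only [show 0 < g by omega, if_true, Nat.sub_zero] at this
  intro i hi j hj x hx
  have h2 := this (g - 3 - i) (by omega) (g - 3 - j) (by omega) x hx
  rw [if_pos (by omega), if_pos (by omega)] at h2
  rwa [show g - 1 - (g - 3 - i + 2) = i by omega, show g - 1 - (g - 3 - j + 2) = j by omega] at h2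

theorem caseA_final {g : ℕ} (hg : 6 ≤ g) {X : Type} [Finite X] (hk1 : g + 2 ≤ Nat.card X)
    (hk : Nat.card X ≤ 2 * g + 1)
    {s : ℕ → Perm X} (hs : Br g s) (ht : TransS g s)
    (hd : ∀ i j, i + 2 ≤ j → j < g → ∀ x, s i x ≠ x → ¬ s j x ≠ x) : False := by
  classical
  have := Fintype.ofFinite X
  have hcard : ∀ i < g, (s i).support.card = (s 0).support.card := by
    intro i hi
    obtain ⟨x, hx⟩ := hs.exists_conj hi
    rw [← hx, Perm.card_support_conj]
  have hdis : ∀ i j, i + 2 ≤ j → j < g → Disjoint (s i).support (s j).support := by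
    intro i j hij hj
    rw [Finset.disjoint_left]
    intro x hx hx'
    rw [Perm.mem_support] at hx hx'
    exact hd i j hij hj x hx hx'
  have h2t : ∀ i, i + 1 < g → (s 0).support.card ≤ 2 * ((s i).support ∩ (s (i+1)).support).card := by
    intro i hi
    have h1 := Finset.card_sdiff_add_card_inter (s i).support (s (i+1)).support
    rw [hcard i (by omega)] at h1
    have h2 : ((s i).support \ (s (i+1)).support).card ≤ ((s i).support ∩ (s (i+1)).support).card := by
      apply Finset.card_le_card_of_injOn (s i) _ ((s i).injective.injOn)
      intro x hx
      simp only [Finset.coe_sdiff, Set.mem_sdiff, Finset.mem_coe, Perm.mem_support, not_not] at hx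
      simp only [Finset.coe_inter, Set.mem_inter_iff, Finset.mem_coe, Perm.mem_support]
      refine ⟨fun h => hx.1 ((s i).injective h), fun h => ?_⟩
      have b := pt (hs.braid i hi) x
      simp only [Perm.mul_apply] at b
      rw [hx.2, h] at b
      -- s i (s i x) = s (i+1) (s i x) = s i x
      exact hx.1 ((s i).injective b)
    omega
  have htt : ∀ i, i + 2 < g → ((s i).support ∩ (s (i+1)).support).card +
      ((s (i+1)).support ∩ (s (i+2)).support).card ≤ (s 0).support.card := by
    intro i hi
    rw [← hcard (i+1) (by omega), ← Finset.card_union_of_disjoint]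
    · apply Finset.card_le_card
      intro x hx
      simp only [Finset.mem_union, Finset.mem_inter] at hx
      tauto
    · exact Finset.disjoint_of_subset_left Finset.inter_subset_left
        (Finset.disjoint_of_subset_right Finset.inter_subset_right (hdis i (i+2) (by omega) hi))
  obtain ⟨t, ht0⟩ : ∃ t, (s 0).support.card = 2 * t :=
    ⟨((s 0).support ∩ (s 1).support).card, by
      have := h2t 0 (by omega); have := h2t 1 (by omega); have := htt 0 (by omega)
      norm_num at *; omega⟩
  have hti : ∀ i, i + 1 < g → ((s i).support ∩ (s (i+1)).support).card = t := by
    intro i hi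
    have h1 := h2t i hi
    by_cases h : i + 2 < g
    · have h3 := h2t (i+1) (by omega)
      have h4 := htt i h
      rw [show i + 1 + 1 = i + 2 from rfl] at h3
      omega
    · obtain ⟨j, rfl⟩ : ∃ j, i = j + 1 := ⟨i - 1, by omega⟩
      have h3 := h2t j (by omega)
      have h4 := htt j (by omega)
      rw [show j + 1 + 1 = j + 2 from rfl] at h1 ⊢
      omega
  have hun : ∀ m, m < g → ((Finset.range (m+1)).biUnion fun i => (s i).support).card = (m + 2) * t := by
    intro m
    induction m with
    | zero => intro _; simp [ht0]
    | succ m ih =>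
      intro hm
      rw [Finset.range_add_one, Finset.biUnion_insert, Finset.card_union, ih (by omega),
        hcard _ hm, ht0]
      have : (s (m+1)).support ∩ ((Finset.range (m+1)).biUnion fun i => (s i).support) =
          (s m).support ∩ (s (m+1)).support := by
        ext x
        simp only [Finset.mem_inter, Finset.mem_biUnion, Finset.mem_range]
        constructor
        · rintro ⟨hx, i, hi, hxi⟩
          refine ⟨?_, hx⟩
          by_cases him : i = m
          · rwa [← him]
          · exact absurd hx (Finset.disjoint_left.1 (hdis i (m+1) (by omega) hm) hxi)
        · rintro ⟨hx, hx'⟩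
          exact ⟨hx', m, by omega, hx⟩
      rw [this, hti m hm]
      have : (m + 1 + 2) * t + t = 2 * t + (m + 2) * t := by ring
      omega
  have hall : ((Finset.range (g-1+1)).biUnion fun i => (s i).support) = Finset.univ := by
    rw [Finset.eq_univ_iff_forall]
    intro x
    by_contra hx
    simp only [Finset.mem_biUnion, Finset.mem_range, not_exists, not_and, Perm.mem_support, not_not] at hx
    have h1 := ht (fun y => y = x) ⟨x, rfl⟩ (by
      rintro i hi y rfl
      exact hx i (by omega))
    have : Nat.card X ≤ 1 := by
      have : Subsingleton X := ⟨fun a b => by rw [h1 a, h1 b]⟩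
      exact Finite.card_le_one_iff_subsingleton.2 this
    omega
  have hfin := hun (g-1) (by omega)
  rw [hall, Finset.card_univ, ← Nat.card_eq_fintype_card] at hfin
  rw [hfin] at hk hk1
  rcases (by omega : t = 0 ∨ t = 1 ∨ 2 ≤ t) with h | h | h
  · subst h; omega
  · subst h; omega
  · have := Nat.mul_le_mul_left (g - 1 + 2) h
    omega



theorem even_of_fpf {Y : Type} [Finite Y] (p : Perm Y) (h2 : ∀ x, p (p x) = x) (h1 : ∀ x, p x ≠ x) :
    2 ∣ Nat.card Y := by
  classical
  have := Fintype.ofFinite Y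
  have h := Perm.two_dvd_card_support (σ := p) (by ext x; simp [pow_two, h2])
  have e : p.support = Finset.univ := by
    rw [Finset.eq_univ_iff_forall]; intro x; rw [Perm.mem_support]; exact h1 x
  rwa [e, Finset.card_univ, ← Nat.card_eq_fintype_card] at h

theorem three_le {Y : Type} [Finite Y] {x y z : Y} (h1 : x ≠ y) (h2 : x ≠ z) (h3 : y ≠ z) :
    3 ≤ Nat.card Y := by
  classical
  have := Fintype.ofFinite Y
  rw [Nat.card_eq_fintype_card, ← Finset.card_univ, ← Finset.card_eq_three.2 ⟨x, y, z, h1, h2, h3, rfl⟩]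
  exact Finset.card_le_univ _

theorem caseB1 {g : ℕ} (hg : 6 ≤ g) {X : Type} [Finite X] (hk : Nat.card X ≤ 2 * g + 1)
    {s : ℕ → Perm X} (hs : Br g s)
    (hfix : 2 * g - 2 ≤ Nat.card {x // s 0 x ≠ x ∧ s 0 (s 0 x) = x})
    (hd : ∀ i j, i + 2 ≤ j → j < g → ∀ x, ¬ (s i x ≠ x ∧ s i (s i x) = x) →
        ¬ ¬ (s j x ≠ x ∧ s j (s j x) = x)) :
    (∀ x, s 0 (s 0 x) = x) ∧ (Nat.card {x // s 0 x = x} = 0 ∨ Nat.card {x // s 0 x = x} = 2) := by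
  classical
  have hN : Nat.card {x // s 0 x ≠ x ∧ s 0 (s 0 x) = x} +
      Nat.card {x // ¬ (s 0 x ≠ x ∧ s 0 (s 0 x) = x)} = Nat.card X := by
    rw [← Nat.card_sum]; exact Nat.card_congr (Equiv.sumCompl _)
  have hc := pt (hs.comm 0 2 (by omega))
  simp only [Perm.mul_apply] at hc
  let U : X → Prop := fun x => ¬ (s 0 x ≠ x ∧ s 0 (s 0 x) = x)
  have hU2 : ∀ x, U (s 2 x) ↔ U x := fun x => by
    simp only [U, hc, ne_eq, EmbeddingLike.apply_eq_iff_eq]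
  have hU0 : ∀ x, U (s 0 x) ↔ U x := fun x => by simp [U]
  have hdd : ∀ x, U x → s 2 x ≠ x ∧ s 2 (s 2 x) = x := fun x hx =>
    not_not.1 (hd 0 2 (by omega) (by omega) x hx)
  have hev := even_of_fpf ((s 2).subtypePerm hU2) (fun x => Subtype.ext (hdd x x.2).2)
    (fun x hx => (hdd x x.2).1 (congrArg Subtype.val hx))
  have hle : Nat.card {x // U x} ≤ 2 := by
    have : Nat.card {x // U x} ≤ 3 := by change _ + Nat.card {x // U x} = _ at hN; omega
    omega
  have hUfix : ∀ x, U x → s 0 x = x := by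
    intro x hx
    by_contra hne
    have h1 := (hU2 x).2 hx
    have h0 := (hU0 x).2 hx
    have h02 : s 0 x ≠ s 2 x := by
      intro h
      apply hx
      refine ⟨hne, ?_⟩
      rw [h, hc, h]; exact (hdd x hx).2
    have := three_le (x := (⟨x, hx⟩ : {x // U x})) (y := ⟨_, h1⟩) (z := ⟨_, h0⟩)
      (fun h => (hdd x hx).1 (congrArg Subtype.val h).symm) (fun h => hne (congrArg Subtype.val h).symm)
      (fun h => h02 (congrArg Subtype.val h).symm)
    omega
  have hUe : ∀ x, U x ↔ s 0 x = x := fun x => ⟨hUfix x, fun h h' => h'.1 h⟩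
  refine ⟨fun x => ?_, ?_⟩
  · by_cases hx : U x
    · rw [hUfix x hx, hUfix x hx]
    · exact (not_not.1 hx).2
  · rw [← Nat.card_congr (Equiv.subtypeEquivRight hUe)]
    omega

theorem fixlem {X : Type} {a b c d : Perm X} (h2 : ∀ x y z, a x = x → a y = y → a z = z → x ≠ y → z = x ∨ z = y)
    (hac : ∀ x, a (c x) = c (a x)) (had : ∀ x, a (d x) = d (a x)) (hbd : ∀ x, b (d x) = d (b x))
    (hbc : ∀ x, b (c (b x)) = c (b (c x)))
    (nac : ∀ x, a x = x → c x ≠ x) (nad : ∀ x, a x = x → d x ≠ x) :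
    ∀ x, a x = x → b x ≠ x := by
  intro x hx hbx
  have hdx := nad x hx
  have hcx : c x = d x := by
    rcases h2 x (d x) (c x) hx (by rw [had, hx]) (by rw [hac, hx]) hdx.symm with h | h
    · exact absurd h (nac x hx)
    · exact h
  have hb := hbc x
  rw [hbx, hcx, hbd, hbx] at hb
  -- d x = c (d x)
  exact nac (d x) (by rw [had, hx]) hb.symm

theorem caseB2 {g : ℕ} (hg : 6 ≤ g) {X : Type} [Finite X] (hk : Nat.card X ≤ 2 * g + 1)
    {s : ℕ → Perm X} (hs : Br g s) (hinv : ∀ i < g, ∀ x, s i (s i x) = x)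
    (hf : Nat.card {x // s 0 x = x} = 2)
    (hd : ∀ i j, i + 2 ≤ j → j < g → ∀ x, s i x = x → s j x ≠ x) : False := by
  classical
  have := Fintype.ofFinite X
  have hcom : ∀ i j, i + 2 ≤ j → ∀ x, s i (s j x) = s j (s i x) := fun i j h => pt (hs.comm i j h)
  have hbr : ∀ i, i + 1 < g → ∀ x, s i (s (i+1) (s i x)) = s (i+1) (s i (s (i+1) x)) :=
    fun i h => pt (hs.braid i h)
  have eqv : Eqv (fun (p : Perm X) x => p x = x) :=
    ⟨fun h p x => by simp, fun p q x h1 h2 => by simp [h1]⟩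
  have hcard : ∀ i < g, Nat.card {x // s i x = x} = 2 := fun i hi => (hs.card_eq eqv hi).trans hf
  have h2 : ∀ i < g, ∀ x y z, s i x = x → s i y = y → s i z = z → x ≠ y → z = x ∨ z = y := by
    intro i hi x y z hx hy hz hxy
    by_contra hcon
    push Not at hcon
    have := three_le (x := (⟨x, hx⟩ : {x // s i x = x})) (y := ⟨y, hy⟩) (z := ⟨z, hz⟩)
      (by simpa using hxy) (by simpa using hcon.1.symm) (by simpa using hcon.2.symm)
    have := hcard i hi
    omega
  have hd1 : ∀ i, i + 1 < g → ∀ x, s i x = x → s (i+1) x ≠ x := by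
    intro i hi
    by_cases h3 : i + 3 < g
    · exact fixlem (a := s i) (b := s (i+1)) (c := s (i+2)) (d := s (i+3)) (h2 i (by omega))
        (hcom _ _ (by omega)) (hcom _ _ (by omega)) (hcom _ _ (by omega)) (hbr (i+1) (by omega))
        (hd i (i+2) (by omega) (by omega)) (hd i (i+3) (by omega) (by omega))
    · obtain ⟨j, rfl⟩ : ∃ j, i = j + 2 := ⟨i - 2, by omega⟩
      have := fixlem (a := s (j+3)) (b := s (j+2)) (c := s (j+1)) (d := s j) (h2 (j+3) (by omega))
        (fun x => (hcom _ _ (by omega) x).symm) (fun x => (hcom _ _ (by omega) x).symm)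
        (fun x => (hcom _ _ (by omega) x).symm)
        (fun x => (hbr (j+1) (by omega) x).symm)
        (fun x h h' => hd (j+1) (j+3) (by omega) (by omega) x h' h)
        (fun x h h' => hd j (j+3) (by omega) (by omega) x h' h)
      exact fun x h h' => this x h' h
  have hdlt : ∀ i j, i < j → j < g → ∀ x, s i x = x → s j x ≠ x := by
    intro i j hij hj
    by_cases h : j = i + 1
    · subst h; exact hd1 i hj
    · exact hd i j (by omega) hj
  let t : ℕ → Perm X := fun m => if m < g then s m else s 1 * s 0 * (s 1)⁻¹
  have htc : ∀ m, (Finset.univ.filter fun x => t m x = x).card = 2 := by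
    intro m
    rw [← Fintype.card_subtype, ← Nat.card_eq_fintype_card]
    by_cases hm : m < g
    · simp only [t, hm, if_true]; exact hcard m hm
    · simp only [t, hm, if_false]
      exact (eqv.card (s 1) (s 0)).trans hf
  have hlast : ∀ i < g, ∀ x, s i x = x → (s 1 * s 0 * (s 1)⁻¹) x ≠ x := by
    intro i hi x hx ht
    have hs1 : (s 1)⁻¹ x = s 1 x := by
      rw [Perm.inv_eq_iff_eq, hinv 1 (by omega)]
    rw [Perm.mul_apply, Perm.mul_apply, hs1] at ht
    have hy : s 0 (s 1 x) = s 1 x := by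
      have := congrArg (s 1) ht
      rwa [hinv 1 (by omega)] at this
    rcases (by omega : i = 0 ∨ i = 1 ∨ i = 2 ∨ 3 ≤ i) with h | h | h | h
    · subst h
      have b := hbr 0 (by omega) x
      norm_num at b
      rw [hx, hy, hinv 1 (by omega)] at b
      exact hd1 0 (by omega) x hx b
    · subst h
      rw [hx] at hy
      exact hd1 0 (by omega) x hy hx
    · subst h
      have b := hbr 1 (by omega) (s 1 x)
      norm_num at b
      rw [hinv 1 (by omega), hx] at b
      -- s 1 x = s 2 (s 1 (s 2 (s 1 x)))
      have b2 := congrArg (s 2) b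
      rw [hinv 2 (by omega)] at b2
      refine hd1 0 (by omega) (s 2 (s 1 x)) ?_ b2.symm
      rw [hcom 0 2 (by omega), hy]
    · refine hd 0 i (by omega) hi (s 1 x) hy ?_
      rw [← hcom 1 i (by omega), hx]
  have hdis : ∀ i j, i < j → j < g + 1 → ∀ x, t i x = x → t j x ≠ x := by
    intro i j hij hj x hx
    by_cases h : j < g
    · simp only [t, h, show i < g by omega, if_true] at hx ⊢
      exact hdlt i j hij h x hx
    · simp only [t, h, show i < g by omega, if_true, if_false] at hx ⊢
      exact hlast i (by omega) x hx
  have hcu := Finset.card_biUnion (s := Finset.range (g+1)) (t := fun m => Finset.univ.filter fun x => t m x = x)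
    (by
      intro i hi j hj hij
      rw [Finset.mem_coe, Finset.mem_range] at hi hj
      change Disjoint _ _
      rw [Finset.disjoint_left]
      intro x hx hx'
      simp only [Finset.mem_filter, Finset.mem_univ, true_and] at hx hx'
      rcases lt_or_gt_of_ne hij with h | h
      · exact hdis i j h hj x hx hx'
      · exact hdis j i h hi x hx' hx)
  have hle := Finset.card_le_univ ((Finset.range (g+1)).biUnion (fun m => Finset.univ.filter fun x => t m x = x))
  rw [hcu, ← Nat.card_eq_fintype_card] at hle
  simp only [htc, Finset.sum_const, Finset.card_range, smul_eq_mul] at hle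
  omega


def T {G : Type*} [Group G] (s : ℕ → G) (i : ℕ) : ℕ → G
  | 0 => s i
  | (d+1) => s (i+d+1) * T s i d * s (i+d+1)

theorem T_sq {G : Type*} [Group G] {g : ℕ} {s : ℕ → G} (h2 : ∀ i < g, s i * s i = 1) (i : ℕ) :
    ∀ d, i + d < g → T s i d * T s i d = 1 := by
  intro d
  induction d with
  | zero => intro h; exact h2 _ h
  | succ d ih =>
    intro h
    have h1 := ih (by omega)
    have h3 := h2 (i+d+1) (by omega)
    simp only [T]
    calc s (i+d+1) * T s i d * s (i+d+1) * (s (i+d+1) * T s i d * s (i+d+1))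
        = s (i+d+1) * T s i d * (s (i+d+1) * s (i+d+1)) * T s i d * s (i+d+1) := by group
      _ = s (i+d+1) * (T s i d * T s i d) * s (i+d+1) := by rw [h3]; group
      _ = 1 := by rw [h1]; simpa using h3

theorem T_far {G : Type*} [Group G] {g : ℕ} {s : ℕ → G} (hs : Br g s) (i k : ℕ) :
    ∀ d, (i + d + 2 ≤ k ∨ k + 2 ≤ i) → s k * T s i d = T s i d * s k := by
  intro d
  induction d with
  | zero =>
    intro h
    rcases h with h | h
    · exact (hs.comm i k h).symm
    · exact (hs.comm k i h)
  | succ d ih =>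
    intro h
    have h1 := ih (by omega)
    have h3 : s k * s (i+d+1) = s (i+d+1) * s k := by
      rcases h with h | h
      · exact (hs.comm (i+d+1) k (by omega)).symm
      · exact (hs.comm k _ (by omega))
    simp only [T]
    calc s k * (s (i+d+1) * T s i d * s (i+d+1)) = (s k * s (i+d+1)) * T s i d * s (i+d+1) := by group
      _ = s (i+d+1) * (s k * T s i d) * s (i+d+1) := by rw [h3]; group
      _ = s (i+d+1) * T s i d * (s k * s (i+d+1)) := by rw [h1]; group
      _ = _ := by rw [h3]; group

theorem T_low {G : Type*} [Group G] {g : ℕ} {s : ℕ → G} (hs : Br g s) (i : ℕ) :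
    ∀ d, i + d + 1 < g → s i * T s (i+1) d * s i = T s i (d+1) := by
  intro d
  induction d with
  | zero => intro h; simpa [T] using hs.braid i h
  | succ d ih =>
    intro h
    have h1 := ih (by omega)
    have h3 : s i * s (i+1+d+1) = s (i+1+d+1) * s i := hs.comm _ _ (by omega)
    rw [T, T, ← h1, show i + (d+1) + 1 = i+1+d+1 by omega]
    calc s i * (s (i+1+d+1) * T s (i+1) d * s (i+1+d+1)) * s i
        = (s i * s (i+1+d+1)) * T s (i+1) d * (s (i+1+d+1) * s i) := by group
      _ = (s (i+1+d+1) * s i) * T s (i+1) d * (s i * s (i+1+d+1)) := by rw [← h3]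
      _ = _ := by group

theorem T_mid {G : Type*} [Group G] {g : ℕ} {s : ℕ → G} (hs : Br g s) (i m : ℕ) :
    ∀ d, m + 1 ≤ d → i + d + 1 < g → s (i+m+1) * T s i (d+1) = T s i (d+1) * s (i+m+1) := by
  intro d hd
  induction d, hd using Nat.le_induction with
  | base =>
    intro h
    have hb := hs.braid (i+m+1) (by omega)
    have hf := T_far hs i (i+m+1+1) m (by omega)
    rw [T, T, show i + (m+1) + 1 = i+m+1+1 by omega]
    generalize s (i+m+1) = b at *
    generalize s (i+m+1+1) = c at *
    generalize T s i m = t at *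
    calc b * (c * (b * t * b) * c) = (b * c * b) * t * b * c := by group
      _ = c * b * (c * t) * b * c := by rw [hb]; group
      _ = c * b * t * (c * b * c) := by rw [hf]; group
      _ = _ := by rw [← hb]; group
  | succ d hd ih =>
    intro h
    have h1 := ih (by omega)
    have h3 : s (i+m+1) * s (i+(d+1)+1) = s (i+(d+1)+1) * s (i+m+1) := hs.comm _ _ (by omega)
    rw [T]
    calc s (i+m+1) * (s (i+(d+1)+1) * T s i (d+1) * s (i+(d+1)+1))
        = (s (i+m+1) * s (i+(d+1)+1)) * T s i (d+1) * s (i+(d+1)+1) := by group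
      _ = s (i+(d+1)+1) * (s (i+m+1) * T s i (d+1)) * s (i+(d+1)+1) := by rw [h3]; group
      _ = s (i+(d+1)+1) * T s i (d+1) * (s (i+m+1) * s (i+(d+1)+1)) := by rw [h1]; group
      _ = _ := by rw [h3]; group

def tt {G : Type*} [Group G] (s : ℕ → G) (i j : ℕ) : G :=
  if i < j then T s i (j - i - 1) else T s j (i - j - 1)

theorem tt_symm {G : Type*} [Group G] (s : ℕ → G) (i j : ℕ) : tt s i j = tt s j i := by
  unfold tt
  rcases lt_trichotomy i j with h | h | h
  · rw [if_pos h, if_neg (by omega)]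
  · subst h; rfl
  · rw [if_neg (by omega), if_pos h]

theorem tt_lt {G : Type*} [Group G] (s : ℕ → G) (i d : ℕ) : tt s i (i+d+1) = T s i d := by
  unfold tt
  rw [if_pos (by omega)]
  congr 1; omega

theorem inv_conj {G : Type*} [Group G] {a b c : G} (ha : a * a = 1) (h : a * b * a = c) :
    a * c * a = b := by
  rw [← h]
  calc a * (a * b * a) * a = (a * a) * b * (a * a) := by group
    _ = b := by rw [ha]; group

theorem comm_conj {G : Type*} [Group G] {a b : G} (ha : a * a = 1) (h : a * b = b * a) :
    a * b * a = b := by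
  rw [h, mul_assoc, ha, mul_one]

theorem tt_conj_lt {G : Type*} [Group G] {g : ℕ} {s : ℕ → G} (hs : Br g s) (h2 : ∀ i < g, s i * s i = 1)
    (k : ℕ) (hk : k < g) (i d : ℕ) (hj : i + d < g) :
    s k * tt s i (i+d+1) * s k = tt s (Equiv.swap k (k+1) i) (Equiv.swap k (k+1) (i+d+1)) := by
  have e2 := h2 k hk
  by_cases c1 : k = i + d + 1
  · subst c1
    rw [Equiv.swap_apply_left, Equiv.swap_apply_of_ne_of_ne (by omega) (by omega), tt_lt]
    exact (tt_lt s i (d+1)).symm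
  by_cases c2 : i + d + 2 ≤ k
  · rw [Equiv.swap_apply_of_ne_of_ne (by omega) (by omega), Equiv.swap_apply_of_ne_of_ne (by omega) (by omega), tt_lt]
    exact comm_conj e2 (T_far hs i k d (by omega))
  by_cases c3 : k + 2 ≤ i
  · rw [Equiv.swap_apply_of_ne_of_ne (by omega) (by omega), Equiv.swap_apply_of_ne_of_ne (by omega) (by omega), tt_lt]
    exact comm_conj e2 (T_far hs i k d (by omega))
  by_cases c4 : k + 1 = i
  · subst c4
    rw [Equiv.swap_apply_right, Equiv.swap_apply_of_ne_of_ne (by omega) (by omega), tt_lt,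
      show k+1+d+1 = k+(d+1)+1 by omega, tt_lt]
    exact T_low hs k d (by omega)
  by_cases c5 : k = i
  · subst c5
    rw [Equiv.swap_apply_left]
    rcases d with _ | d
    · rw [Equiv.swap_apply_right, tt_symm s (k+1) k, tt_lt s k 0]
      exact comm_conj e2 rfl
    · rw [Equiv.swap_apply_of_ne_of_ne (by omega) (by omega), tt_lt,
        show k+(d+1)+1 = k+1+d+1 by omega, tt_lt]
      exact inv_conj e2 (T_low hs k d (by omega))
  obtain ⟨m, rfl⟩ : ∃ m, k = i + m + 1 := ⟨k - i - 1, by omega⟩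
  rw [Equiv.swap_apply_of_ne_of_ne (by omega) (by omega) (x := i)]
  by_cases c6 : m + 1 = d
  · subst c6
    rw [show i + (m+1) + 1 = i+m+1+1 by omega, Equiv.swap_apply_right, tt_lt s i m,
      show i + m + 1 + 1 = i+(m+1)+1 by omega, tt_lt]
    exact inv_conj e2 rfl
  · rw [Equiv.swap_apply_of_ne_of_ne (by omega) (by omega), tt_lt]
    obtain ⟨d, rfl⟩ : ∃ d', d = d' + 1 := ⟨d - 1, by omega⟩
    exact comm_conj e2 (T_mid hs i m d (by omega) (by omega))

theorem tt_conj {G : Type*} [Group G] {g : ℕ} {s : ℕ → G} (hs : Br g s) (h2 : ∀ i < g, s i * s i = 1)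
    (k : ℕ) (hk : k < g) (i j : ℕ) (hij : i ≠ j) (hi : i ≤ g) (hj : j ≤ g) :
    s k * tt s i j * s k = tt s (Equiv.swap k (k+1) i) (Equiv.swap k (k+1) j) := by
  rcases lt_or_gt_of_ne hij with h | h
  · obtain ⟨d, rfl⟩ : ∃ d, j = i + d + 1 := ⟨j - i - 1, by omega⟩
    exact tt_conj_lt hs h2 k hk i d (by omega)
  · obtain ⟨d, rfl⟩ : ∃ d, i = j + d + 1 := ⟨i - j - 1, by omega⟩
    rw [tt_symm s (j+d+1), tt_symm s (Equiv.swap k (k+1) (j+d+1))]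
    exact tt_conj_lt hs h2 k hk j d (by omega)

theorem tt_E {G : Type*} [Group G] {g : ℕ} {s : ℕ → G} (hs : Br g s) (h2 : ∀ i < g, s i * s i = 1)
    (p : Perm (Fin (g+1))) : ∃ c : G, ∀ i j : Fin (g+1), i ≠ j → c * tt s i j * c⁻¹ = tt s (p i) (p j) := by
  have hp : p ∈ Submonoid.closure (Set.range fun i : Fin g ↦ swap i.castSucc i.succ) := by
    rw [Equiv.Perm.mclosure_swap_castSucc_succ]; trivial
  induction hp using Submonoid.closure_induction with
  | mem x hx =>
    obtain ⟨k, rfl⟩ := hx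
    refine ⟨s k, fun i j hij => ?_⟩
    have key : ∀ i : Fin (g+1), ((swap k.castSucc k.succ i : Fin (g+1)) : ℕ) = Equiv.swap (k:ℕ) (k+1) i := by
      intro i
      simp only [Equiv.swap_apply_def, Fin.ext_iff]
      split_ifs <;> simp_all
    have e : (s k)⁻¹ = s k := inv_eq_of_mul_eq_one_left (h2 k k.2)
    rw [e, key, key]
    exact tt_conj hs h2 k k.2 i j (fun h => hij (Fin.ext h)) (by omega) (by omega)
  | one => exact ⟨1, by simp⟩
  | mul x y _ _ hx hy =>
    obtain ⟨c, hc⟩ := hx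
    obtain ⟨d, hd⟩ := hy
    refine ⟨c * d, fun i j hij => ?_⟩
    rw [Perm.mul_apply, Perm.mul_apply, ← hc _ _ (fun h => hij (y.injective h)), ← hd _ _ hij]
    group

theorem tt_R {G : Type*} [Group G] {g : ℕ} (hg : 1 ≤ g) {s : ℕ → G} (hs : Br g s) (h2 : ∀ i < g, s i * s i = 1)
    (a b : Fin (g+1)) (hab : a ≠ b) (i j : Fin (g+1)) (hij : i ≠ j) :
    tt s a b * tt s i j * tt s a b = tt s (swap a b i) (swap a b j) := by
  obtain ⟨p, hp⟩ := Equiv.Perm.exists_extending_pair (β := Fin (g+1)) ![⟨0, by omega⟩, ⟨1, by omega⟩] ![a, b]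
    (by intro x y; fin_cases x <;> fin_cases y <;> simp)
    (by intro x y; fin_cases x <;> fin_cases y <;> simp [hab, hab.symm])
  have p0 : p ⟨0, by omega⟩ = a := hp 0
  have p1 : p ⟨1, by omega⟩ = b := hp 1
  obtain ⟨c, hc⟩ := tt_E hs h2 p
  have h01 := hc ⟨0, by omega⟩ ⟨1, by omega⟩ (by simp)
  rw [p0, p1] at h01
  have e0 : tt s 0 1 = s 0 := tt_lt s 0 0
  rw [e0] at h01
  have hi := hc (p.symm i) (p.symm j) (by simpa using hij)
  rw [Equiv.apply_symm_apply, Equiv.apply_symm_apply] at hi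
  have hk := tt_conj hs h2 0 (by omega) (p.symm i) (p.symm j) (fun h => hij (p.symm.injective (Fin.ext h))) (by omega) (by omega)
  have key : ∀ i : Fin (g+1), ((swap (⟨0, by omega⟩ : Fin (g+1)) ⟨1, by omega⟩ i : Fin (g+1)) : ℕ) = Equiv.swap 0 1 (i:ℕ) := by
    intro i
    simp only [Equiv.swap_apply_def, Fin.ext_iff]
    split_ifs <;> simp_all
  rw [zero_add, ← key, ← key] at hk
  have h3 := hc (swap ⟨0, by omega⟩ ⟨1, by omega⟩ (p.symm i)) (swap ⟨0, by omega⟩ ⟨1, by omega⟩ (p.symm j))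
    (by simpa using hij)
  have sw : ∀ i, p (swap ⟨0, by omega⟩ ⟨1, by omega⟩ (p.symm i)) = swap a b i := by
    intro i
    rw [← p0, ← p1, Equiv.swap_apply_apply]; rfl
  rw [sw, sw] at h3
  rw [← h3, ← hk, ← h01, ← hi]
  group


theorem s3_cases {G : Type*} [Group G] {s u h : G} (hs : s * s = 1) (hu : u * u = 1)
    (hb : s * u * s = u * s * u) (hh : h ∈ Subgroup.closure {s, u}) :
    h ∈ Subgroup.zpowers (s * u) ∨ h = s ∨ h = u ∨ h = s * u * s := by
  have is : s⁻¹ = s := inv_eq_of_mul_eq_one_left hs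
  have iu : u⁻¹ = u := inv_eq_of_mul_eq_one_left hu
  have r3 : (s * u) ^ 3 = 1 := by
    calc (s * u) ^ 3 = (s * u * s) * (u * s * u) := by simp only [pow_succ, pow_zero, one_mul, mul_assoc]
      _ = 1 := by
        rw [hb]
        calc u * s * u * (u * s * u) = u * (s * ((u * u) * s)) * u := by simp only [mul_assoc]
          _ = 1 := by rw [hu]; simp [hs, hu]
  have key : h = 1 ∨ h = s * u ∨ h = u * s ∨ h = s ∨ h = u ∨ h = s * u * s := by
    have sl : ∀ z, s * (s * z) = z := fun z => by rw [← mul_assoc, hs, one_mul]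
    have ul : ∀ z, u * (u * z) = z := fun z => by rw [← mul_assoc, hu, one_mul]
    have hb' : u * (s * u) = s * (u * s) := by simpa [mul_assoc] using hb.symm
    have e1 : u * (s * (u * s)) = s * u := by
      rw [← hb', ul]
    induction hh using Subgroup.closure_induction_left with
    | one => simp
    | mul_left x hx y hy ih =>
      rcases hx with rfl | rfl <;> rcases ih with rfl | rfl | rfl | rfl | rfl | rfl <;>
        simp only [mul_assoc, hs, hu, sl, ul, hb', e1, mul_one, true_or, or_true]
    | inv_mul_cancel x hx y hy ih =>
      rcases hx with rfl | rfl <;> simp only [is, iu] <;> rcases ih with rfl | rfl | rfl | rfl | rfl | rfl <;>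
        simp only [mul_assoc, hs, hu, sl, ul, hb', e1, mul_one, true_or, or_true]
  rcases key with rfl | rfl | rfl | h | h | h
  · exact Or.inl (Subgroup.one_mem _)
  · exact Or.inl (Subgroup.mem_zpowers _)
  · left
    have : u * s = (s * u)⁻¹ := by rw [mul_inv_rev, is, iu]
    rw [this]; exact Subgroup.inv_mem _ (Subgroup.mem_zpowers _)
  all_goals simp [h]

theorem s3_cube {G : Type*} [Group G] {s u h : G} (hs : s * s = 1) (hu : u * u = 1)
    (hb : s * u * s = u * s * u) (hh : h ∈ Subgroup.zpowers (s * u)) : h * h * h = 1 := by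
  have r3 : (s * u) ^ 3 = 1 := by
    calc (s * u) ^ 3 = (s * u * s) * (u * s * u) := by simp only [pow_succ, pow_zero, one_mul, mul_assoc]
      _ = 1 := by
        rw [hb]
        calc u * s * u * (u * s * u) = u * (s * ((u * u) * s)) * u := by simp only [mul_assoc]
          _ = 1 := by rw [hu]; simp [hs, hu]
  obtain ⟨m, rfl⟩ := Subgroup.mem_zpowers_iff.1 hh
  rw [← zpow_add, ← zpow_add, show m + m + m = (3:ℕ) * m by push_cast; ring, zpow_mul, zpow_natCast, r3, one_zpow]

theorem star_aux {X : Type} [Finite X] (hk : Nat.card X < 18) {s u a : Perm X} (hs : s * s = 1) (hu : u * u = 1)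
    (hb : s * u * s = u * s * u) (fs : ∀ x, s x ≠ x) (fu : ∀ x, u x ≠ x) (fw : ∀ x, (s * u * s) x ≠ x)
    (has : a * s = s * a) (hau : a * u = u * a) (ha : a * a * a = 1) (y : X) (hy : s y ≠ u y) :
    ∃ h ∈ Subgroup.zpowers (s * u), a y = h y := by
  have comm : ∀ h ∈ Subgroup.closure {s, u}, h * a = a * h := by
    intro h hh
    induction hh using Subgroup.closure_induction with
    | mem x hx => rcases hx with rfl | rfl; exacts [has.symm, hau.symm]
    | one => simp
    | mul x z _ _ hx hz => rw [mul_assoc, hz, ← mul_assoc, hx, mul_assoc]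
    | inv x _ hx => rw [inv_mul_eq_iff_eq_mul, ← mul_assoc, hx, mul_inv_cancel_right]
  have hρ : (s * u) y ≠ y := by
    intro h
    apply hy
    have : s ((s * u) y) = s y := by rw [h]
    rw [← this]
    exact pt (show s * (s * u) = u by rw [← mul_assoc, hs, one_mul]) y
  have zfree : ∀ h ∈ Subgroup.zpowers (s * u), h y = y → h = 1 := by
    intro h hh hfix
    by_contra hne
    apply hρ
    have h3 : (s * u) ^ 3 = 1 := by
      have := s3_cube hs hu hb (Subgroup.mem_zpowers (s * u))
      rw [← this]; simp [pow_succ]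
    have : s * u ∈ Subgroup.zpowers h := by
      obtain ⟨m, rfl⟩ := Subgroup.mem_zpowers_iff.1 hh
      have hm : m % 3 = 0 ∨ m % 3 = 1 ∨ m % 3 = 2 := by omega
      have e : ∀ m : ℤ, (s * u) ^ m = (s * u) ^ (m % 3) := by
        intro m
        conv_lhs => rw [← Int.emod_add_mul_ediv m 3, zpow_add, zpow_mul]
        rw [show (s * u) ^ (3:ℤ) = 1 by exact_mod_cast h3]; simp
      rcases hm with h0 | h0 | h0
      · exact absurd (by rw [e, h0]; simp) hne
      · rw [e, h0, zpow_one]; exact Subgroup.mem_zpowers _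
      · refine Subgroup.mem_zpowers_iff.2 ⟨2, ?_⟩
        rw [← zpow_mul, e, show m * 2 % 3 = 1 by omega, zpow_one]
    obtain ⟨m, hm⟩ := Subgroup.mem_zpowers_iff.1 this
    rw [← hm]
    exact Function.IsFixedPt.perm_zpow hfix m
  have free : ∀ h ∈ Subgroup.closure {s, u}, h y = y → h = 1 := by
    intro h hh hfix
    rcases s3_cases hs hu hb hh with h' | rfl | rfl | rfl
    · exact zfree h h' hfix
    · exact absurd hfix (fs y)
    · exact absurd hfix (fu y)
    · exact absurd hfix (fw y)
  by_cases hO : ∃ h ∈ Subgroup.closure {s, u}, a y = h y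
  · obtain ⟨h, hh, e⟩ := hO
    rcases s3_cases hs hu hb hh with h' | h'
    · exact ⟨h, h', e⟩
    · exfalso
      have hh2 : h * h = 1 := by
        rcases h' with rfl | rfl | rfl
        · exact hs
        · exact hu
        · calc s * u * s * (s * u * s) = s * (u * ((s * s) * u)) * s := by simp only [mul_assoc]
            _ = 1 := by rw [hs]; simp [hs, hu]
      have e2 : a (a y) = y := by
        rw [e]
        have := pt (comm h hh) y
        simp only [Perm.mul_apply] at this
        rw [← this, e]
        exact pt hh2 y
      have e3 : a (a (a y)) = y := pt ha y
      rw [e2] at e3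
      rw [e3] at e
      have : h = 1 := free h hh e.symm
      rcases h' with rfl | rfl | rfl
      · exact fs y e.symm
      · exact fu y e.symm
      · exact fw y e.symm
  · exfalso
    push Not at hO
    have hO2 : ∀ h ∈ Subgroup.closure {s, u}, a (a y) ≠ h y := by
      intro h hh e
      apply hO h⁻¹ (Subgroup.inv_mem _ hh)
      have e3 : a (a (a y)) = y := pt ha y
      rw [e] at e3
      have := pt (comm h hh) y
      simp only [Perm.mul_apply] at this
      rw [← this] at e3
      rw [Equiv.Perm.eq_inv_iff_eq]; exact e3
    let H := Subgroup.closure {s, u}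
    have six : 6 ≤ Nat.card H := by
      have m1 : s ∈ H := Subgroup.subset_closure (by simp)
      have m2 : u ∈ H := Subgroup.subset_closure (by simp)
      have o1 : orderOf s = 2 := orderOf_eq_prime (by rw [pow_two, hs]) (by rintro rfl; exact fs y rfl)
      have o2 : orderOf (s * u) = 3 := by
        have : Fact (Nat.Prime 3) := ⟨Nat.prime_three⟩
        refine orderOf_eq_prime ?_ (fun h => hρ (by rw [h]; rfl))
        have := s3_cube hs hu hb (Subgroup.mem_zpowers (s * u))
        rw [← this]; simp [pow_succ]
      have d1 : 2 ∣ Nat.card H := o1 ▸ Subgroup.orderOf_dvd_natCard H m1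
      have d2 : 3 ∣ Nat.card H := o2 ▸ Subgroup.orderOf_dvd_natCard H (H.mul_mem m1 m2)
      have : 0 < Nat.card H := Nat.card_pos
      omega
    have inj : Function.Injective (fun p : Fin 3 × H => (p.2 : Perm X) ((a ^ (p.1 : ℕ)) y)) := by
      have key : ∀ i j : Fin 3, ∀ q ∈ H, (a ^ (i:ℕ)) (q y) = (a ^ (j:ℕ)) y → i = j ∧ q = 1 := by
        intro i j q hq e
        have e3 : ∀ z, a (a (a z)) = z := fun z => pt ha z
        have qi : ∀ z, q z = y → y = z → q = 1 := by rintro z h1 rfl; exact free q hq h1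
        have b1 := hO q hq
        have b2 := hO2 q hq
        have b4 : q y = a y → False := fun h => b1 h.symm
        have b5 : q y = a (a y) → False := fun h => b2 h.symm
        have b6 := fun h => free q hq h
        fin_cases i <;> fin_cases j <;> simp [pow_succ] at e ⊢
        · exact b6 e
        · exact b4 e
        · exact b5 e
        · apply b5
          rw [← e3 (q y), e]
        · exact b6 e
        · exact b4 e
        · apply b4; rw [← e3 (q y), e]
        · apply b5; apply a.injective; rw [← e3 (a (q y)), e]
        · exact b6 e
      rintro ⟨i, h⟩ ⟨j, h'⟩ e
      simp only at e
      have hq : (h'⁻¹ * h : H) ∈ (⊤ : Subgroup H) := trivial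
      have cq := comm _ (h'⁻¹ * h).2
      have cq2 : Commute ((h'⁻¹ * h : H) : Perm X) a := cq
      have e4 := key i j _ (h'⁻¹ * h).2 (by
        rw [← Perm.mul_apply, ← (cq2.pow_right i).eq, Perm.mul_apply]
        simp only [Subgroup.coe_mul, InvMemClass.coe_inv, Perm.mul_apply]
        rw [e]; simp)
      obtain ⟨rfl, e5⟩ := e4
      have : h'⁻¹ * h = 1 := Subtype.ext e5
      rw [inv_mul_eq_one] at this
      rw [this]
    have := Nat.card_le_card_of_injective _ inj
    rw [Nat.card_prod, Nat.card_fin] at this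
    omega


structure TS {Λ X : Type} [DecidableEq Λ] (t : Λ → Λ → Perm X) : Prop where
  symm : ∀ a b, t a b = t b a
  sq : ∀ a b, a ≠ b → t a b * t a b = 1
  fpf : ∀ a b, a ≠ b → ∀ x, t a b x ≠ x
  R : ∀ a b, a ≠ b → ∀ i j, i ≠ j → t a b * t i j * t a b = t (swap a b i) (swap a b j)

namespace TS
variable {Λ X : Type} [DecidableEq Λ] {t : Λ → Λ → Perm X}

theorem tri (h : TS t) {a b c : Λ} (hab : a ≠ b) (hac : a ≠ c) (hbc : b ≠ c) :
    t a b * t b c * t a b = t a c := by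
  rw [h.R a b hab b c hbc, swap_apply_right, swap_apply_of_ne_of_ne hac.symm hbc.symm]

theorem com (h : TS t) {a b c d : Λ} (hab : a ≠ b) (hac : a ≠ c) (had : a ≠ d) (hbc : b ≠ c) (hbd : b ≠ d)
    (hcd : c ≠ d) : t a b * t c d = t c d * t a b := by
  have := h.R a b hab c d hcd
  rw [swap_apply_of_ne_of_ne hac.symm hbc.symm, swap_apply_of_ne_of_ne had.symm hbd.symm] at this
  rw [← eq_mul_inv_iff_mul_eq, inv_eq_of_mul_eq_one_left (h.sq a b hab)] at this
  exact this

theorem inv (h : TS t) {a b : Λ} (hab : a ≠ b) (x : X) : t a b (t a b x) = x := pt (h.sq a b hab) x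

/-- if two sides of a triangle agree, so does the third -/
theorem third (h : TS t) {a b c : Λ} (hab : a ≠ b) (hac : a ≠ c) (hbc : b ≠ c) {x : X}
    (e : t a b x = t b c x) : t a c x = t a b x := by
  rw [← h.tri hab hac hbc, Perm.mul_apply, Perm.mul_apply, e, h.inv hbc, ← e]

theorem bcom (h : TS t) {a b c : Λ} (hab : a ≠ b) (hac : a ≠ c) (hbc : b ≠ c) :
    t a b * t b c * t a b = t b c * t a b * t b c := by
  rw [h.tri hab hac hbc, h.symm b c, h.symm a b, h.tri hbc.symm hac.symm hab.symm, h.symm]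

theorem cube (h : TS t) {a b c : Λ} (hab : a ≠ b) (hac : a ≠ c) (hbc : b ≠ c) :
    t a b * t b c * (t a b * t b c) * (t a b * t b c) = 1 :=
  s3_cube (h.sq _ _ hab) (h.sq _ _ hbc) (h.bcom hab hac hbc) (Subgroup.mem_zpowers _)

theorem star [Finite X] (hk : Nat.card X < 18) (h : TS t) {a b c d e f k : Λ}
    (hn : [a, b, c, d, e, f, k].Nodup) {x : X} (hx : t a b x ≠ t b c x) : t d e x = t f k x := by
  simp only [List.nodup_cons, List.mem_cons, not_or, List.not_mem_nil, not_false_eq_true, List.nodup_nil, and_true] at hn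
  obtain ⟨⟨hab, hac, had, hae, haf, hak⟩, ⟨hbc, hbd, hbe, hbf, hbk⟩, ⟨hcd, hce, hcf, hck⟩, ⟨hde, hdf, hdk⟩, ⟨hef, hek⟩, hfk⟩ := hn
  have aux : ∀ d e f : Λ, d ≠ e → d ≠ f → e ≠ f → a ≠ d → a ≠ e → a ≠ f → b ≠ d → b ≠ e → b ≠ f →
      c ≠ d → c ≠ e → c ≠ f → ∃ p ∈ Subgroup.zpowers (t a b * t b c), (t d e * t e f) x = p x := by
    intro d e f hde hdf hef had hae haf hbd hbe hbf hcd hce hcf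
    refine star_aux hk (h.sq _ _ hab) (h.sq _ _ hbc) (h.bcom hab hac hbc) (h.fpf _ _ hab) (h.fpf _ _ hbc) ?_
      ?_ ?_ (h.cube hde hdf hef) x hx
    · rw [h.tri hab hac hbc]; exact h.fpf _ _ hac
    · rw [mul_assoc, ← h.com hab hae haf hbe hbf hef, ← mul_assoc, ← h.com hab had hae hbd hbe hde, mul_assoc]
    · rw [mul_assoc, ← h.com hbc hbe hbf hce hcf hef, ← mul_assoc, ← h.com hbc hbd hbe hcd hce hde, mul_assoc]
  have com2 : ∀ p ∈ Subgroup.zpowers (t a b * t b c), Commute (t d e * t e f) p := by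
    intro p hp
    obtain ⟨m, rfl⟩ := Subgroup.mem_zpowers_iff.1 hp
    apply Commute.zpow_right
    have c1 : Commute (t d e) (t a b) := (h.com hab had hae hbd hbe hde).symm
    have c2 : Commute (t e f) (t a b) := (h.com hab hae haf hbe hbf hef).symm
    have c3 : Commute (t d e) (t b c) := (h.com hbc hbd hbe hcd hce hde).symm
    have c4 : Commute (t e f) (t b c) := (h.com hbc hbe hbf hce hcf hef).symm
    exact (c1.mul_left c2).mul_right (c3.mul_left c4)
  obtain ⟨p, hp, ep⟩ := aux d e f hde hdf hef had hae haf hbd hbe hbf hcd hce hcf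
  obtain ⟨q, hq, eq⟩ := aux e f k hef hek hfk hae haf hak hbe hbf hbk hce hcf hck
  have e1 : (t d e * t f k) x = (q * p) x := by
    have : t d e * t f k = (t d e * t e f) * (t e f * t f k) := by
      rw [mul_assoc, ← mul_assoc (t e f), h.sq _ _ hef, one_mul]
    rw [this, Perm.mul_apply, eq, ← Perm.mul_apply, (com2 q hq).eq, Perm.mul_apply, ep, Perm.mul_apply]
  have hqp := Subgroup.mul_mem _ hq hp
  have cu := s3_cube (h.sq _ _ hab) (h.sq _ _ hbc) (h.bcom hab hac hbc) hqp
  have cdk : Commute (t f k) (q * p) := by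
    obtain ⟨m, hm⟩ := Subgroup.mem_zpowers_iff.1 hqp
    rw [← hm]
    apply Commute.zpow_right
    have c1 : Commute (t f k) (t a b) := (h.com hab haf hak hbf hbk hfk).symm
    have c2 : Commute (t f k) (t b c) := (h.com hbc hbf hbk hcf hck hfk).symm
    exact c1.mul_right c2
  have cde : Commute (t d e) (q * p) := by
    obtain ⟨m, hm⟩ := Subgroup.mem_zpowers_iff.1 hqp
    rw [← hm]
    apply Commute.zpow_right
    have c1 : Commute (t d e) (t a b) := (h.com hab had hae hbd hbe hde).symm
    have c3 : Commute (t d e) (t b c) := (h.com hbc hbd hbe hcd hce hde).symm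
    exact c1.mul_right c3
  have sqd : (t d e * t f k) * (t d e * t f k) = 1 := by
    rw [mul_assoc, ← mul_assoc (t f k), ← h.com hde hdf hdk hef hek hfk, mul_assoc, h.sq _ _ hfk, mul_one, h.sq _ _ hde]
  have e2 : ((q * p) * (q * p)) x = x := by
    rw [Perm.mul_apply, ← e1, ← Perm.mul_apply, ← (cde.mul_left cdk).eq, Perm.mul_apply, ← e1, ← Perm.mul_apply, sqd]; rfl
  have e3 : (q * p) x = x := by
    have := pt cu x
    rw [mul_assoc, Perm.mul_apply, e2] at this
    exact this
  rw [e3, Perm.mul_apply] at e1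
  have := congrArg (t d e) e1
  rw [h.inv hde] at this
  exact this.symm

/-- Claim D for seven letters. -/
theorem D7 [Finite X] (hk : Nat.card X < 18) (h : TS t) {a b c d e f k : Λ}
    (hn : [a, b, c, d, e, f, k].Nodup) {x : X} (hx : t a b x ≠ t b c x) : t d e x = t e f x := by
  by_contra hy
  have h1 := h.star hk hn hx
  have hn' := hn
  simp only [List.nodup_cons, List.mem_cons, not_or, List.not_mem_nil, not_false_eq_true, List.nodup_nil, and_true] at hn
  obtain ⟨⟨hab, hac, had, hae, haf, hak⟩, ⟨hbc, hbd, hbe, hbf, hbk⟩, ⟨hcd, hce, hcf, hck⟩, ⟨hde, hdf, hdk⟩, ⟨hef, hek⟩, hfk⟩ := hn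
  have st : ∀ {a b c d e f k : Λ} (hn : [a, b, c, d, e, f, k].Nodup), t a b x ≠ t b c x → t d e x = t f k x :=
    fun hn hx => h.star hk hn hx
  -- d e f k = 4 5 6 7
  have h2 : t d k x = t e f x := st (a := a) (b := b) (c := c) (by simp only [List.nodup_cons, List.mem_cons, not_or, List.not_mem_nil, not_false_eq_true, List.nodup_nil, and_true]; and_intros <;> first | assumption | (apply Ne.symm; assumption)) hx
  -- x ∈ P_{d e k}
  have h3 : t d e x ≠ t e k x := by
    intro hh
    have := h.third hde hdk hek hh
    rw [this] at h2
    exact hy h2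
  have a1 : t a b x = t c k x := st (a := d) (b := e) (c := f) (by simp only [List.nodup_cons, List.mem_cons, not_or, List.not_mem_nil, not_false_eq_true, List.nodup_nil, and_true]; and_intros <;> first | assumption | (apply Ne.symm; assumption)) hy
  have a2 : t a c x = t b k x := st (a := d) (b := e) (c := f) (by simp only [List.nodup_cons, List.mem_cons, not_or, List.not_mem_nil, not_false_eq_true, List.nodup_nil, and_true]; and_intros <;> first | assumption | (apply Ne.symm; assumption)) hy
  have a3 : t a b x = t c f x := st (a := d) (b := e) (c := k) (by simp only [List.nodup_cons, List.mem_cons, not_or, List.not_mem_nil, not_false_eq_true, List.nodup_nil, and_true]; and_intros <;> first | assumption | (apply Ne.symm; assumption)) h3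
  have a4 : t a c x = t b f x := st (a := d) (b := e) (c := k) (by simp only [List.nodup_cons, List.mem_cons, not_or, List.not_mem_nil, not_false_eq_true, List.nodup_nil, and_true]; and_intros <;> first | assumption | (apply Ne.symm; assumption)) h3
  have b1 : t f k x = t f c x := h.third (Ne.symm hcf) hfk hck (by rw [h.symm f c, ← a3, a1])
  have b2 : t f k x = t f b x := h.third (Ne.symm hbf) hfk hbk (by rw [h.symm f b, ← a4, a2])
  apply hx
  rw [h.symm f c, ← a3] at b1
  rw [h.symm f b, ← a4] at b2
  have := h.third (Ne.symm hab) hbc hac (x := x) (by rw [h.symm b a, ← b1, b2])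
  rw [this, h.symm b a]
end TS


namespace TS
variable {Λ X : Type} [DecidableEq Λ] {t : Λ → Λ → Perm X}

theorem agree (h : TS t) (M : Λ → Prop) (x : X)
    (hM : ∀ a b c, M a → M b → M c → a ≠ b → a ≠ c → b ≠ c → t a b x = t b c x)
    (a b c d : Λ) (ha : M a) (hb : M b) (hc : M c) (hd : M d) (hab : a ≠ b) (hcd : c ≠ d) :
    t a b x = t c d x := by
  have key : ∀ a b d, M a → M b → M d → a ≠ b → b ≠ d → t a b x = t b d x := by
    intro a b d ha hb hd hab hbd
    by_cases had : a = d
    · subst had; rw [h.symm]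
    · exact hM a b d ha hb hd hab had hbd
  by_cases hbc : b = c
  · subst hbc; exact key a b d ha hb hd hab hcd
  · rw [key a b c ha hb hc hab hbc, key b c d hb hc hd hbc hcd]

def Q (t : Λ → Λ → Perm X) (x : X) (e : Λ) : Prop := ∃ x', ∀ a b, a ≠ b → a ≠ e → b ≠ e → t a b x = x'

def DD (t : Λ → Λ → Perm X) : Prop := ∀ a b c d e f : Λ, [a, b, c, d, e, f].Nodup → ∀ x,
  t a b x ≠ t b c x → t d e x = t e f x

theorem center [Fintype Λ] (h : TS t) (hN : 7 ≤ Fintype.card Λ) (hD : DD t) (x : X) : ∃ e, Q t x e := by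
  by_cases hP : ∃ a b c, a ≠ b ∧ a ≠ c ∧ b ≠ c ∧ t a b x ≠ t b c x
  · obtain ⟨a, b, c, hab, hac, hbc, hx⟩ := hP
    let M : Λ → Prop := fun m => m ≠ a ∧ m ≠ b ∧ m ≠ c
    have hM : ∀ a b c, M a → M b → M c → a ≠ b → a ≠ c → b ≠ c → t a b x = t b c x := by
      intro d e f hd he hf hde hdf hef
      refine hD a b c d e f ?_ x hx
      have h1 := hd.1.symm
      have h2 := hd.2.1.symm
      have h3 := hd.2.2.symm
      have h4 := he.1.symm
      have h5 := he.2.1.symm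
      have h6 := he.2.2.symm
      have h7 := hf.1.symm
      have h8 := hf.2.1.symm
      have h9 := hf.2.2.symm
      simp [*]
    have hA := h.agree M x hM
    have hcard : Fintype.card (Fin 4) ≤ Fintype.card {m // m ∈ (Finset.univ \ {a, b, c} : Finset Λ)} := by
      rw [Fintype.card_coe, Fintype.card_fin]
      have := Finset.le_card_sdiff ({a, b, c} : Finset Λ) Finset.univ
      have h3 : ({a, b, c} : Finset Λ).card ≤ 3 := Finset.card_le_three
      rw [Finset.card_univ] at this
      omega
    obtain ⟨m⟩ := Function.Embedding.nonempty_of_card_le hcard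
    have mM : ∀ i, M (m i) := by
      intro i
      have := (m i).2
      simp only [Finset.mem_sdiff, Finset.mem_univ, true_and, Finset.mem_insert, Finset.mem_singleton, not_or] at this
      exact this
    have mne : ∀ i j, i ≠ j → (m i : Λ) ≠ m j := fun i j hij e => hij (m.injective (Subtype.ext e))
    have m01 := mne 0 1 (by decide)
    have m02 := mne 0 2 (by decide)
    have m03 := mne 0 3 (by decide)
    have m12 := mne 1 2 (by decide)
    have m13 := mne 1 3 (by decide)
    have m23 := mne 2 3 (by decide)
    have M0 := mM 0
    have M1 := mM 1
    have M2 := mM 2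
    have M3 := mM 3
    generalize (m 0 : Λ) = m0 at *
    generalize (m 1 : Λ) = m1 at *
    generalize (m 2 : Λ) = m2 at *
    generalize (m 3 : Λ) = m3 at *
    clear mM mne hcard m
    set x' := t m0 m1 x with hx'
    have neM : ∀ u v, ¬ M u → M v → u ≠ v := by rintro u v h1 h2 rfl; exact h1 h2
    -- goodness does not depend on the witness
    have good : ∀ l m n, ¬ M l → M m → M n → t l m x = x' → t l n x = x' := by
      intro l m n hl hm hn e
      by_cases hmn : m = n
      · rw [← hmn, e]
      · rw [h.third (neM l m hl hm) (neM l n hl hn) hmn (x := x) (by rw [e]; exact hA _ _ _ _ M0 M1 hm hn m01 hmn), e]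
    have two : ∀ l l', l ≠ l' → ¬ M l → ¬ M l' → t l m0 x ≠ x' → t l' m0 x = x' := by
      intro l l' hll hl hl' hb
      apply good l' m2 m0 hl' M2 M0
      rw [hA m0 m1 m2 m3 M0 M1 M2 M3 m01 m23] at hx'
      rw [hx']
      have n1 := neM l m0 hl M0
      have n2 := neM l m1 hl M1
      have n3 := neM l m2 hl M2
      have n4 := neM l m3 hl M3
      have n5 := (neM l' m0 hl' M0).symm
      have n6 := (neM l' m1 hl' M1).symm
      have n7 := neM l' m2 hl' M2
      have n8 := neM l' m3 hl' M3
      refine hD l m0 m1 l' m2 m3 (by clear hx'; simp [*]) x hb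
    have fin : ∀ e, (∀ l, ¬ M l → l ≠ e → t l m0 x = x') → Q t x e := by
      intro e he
      refine ⟨x', fun u v huv hu hv => ?_⟩
      by_cases hMu : M u
      · by_cases hMv : M v
        · exact hA u v m0 m1 hMu hMv M0 M1 huv m01
        · rw [h.symm]; exact good v m0 u hMv M0 hMu (he v hMv hv)
      · by_cases hMv : M v
        · exact good u m0 v hMu M0 hMv (he u hMu hu)
        · have e1 := he u hMu hu
          have e2 := he v hMv hv
          rw [h.third (neM u m0 hMu M0) huv (neM v m0 hMv M0).symm (x := x) (by rw [e1, h.symm, e2]), e1]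
    by_cases hbad : ∃ l, ¬ M l ∧ t l m0 x ≠ x'
    · obtain ⟨l, hl, hb⟩ := hbad
      exact ⟨l, fin l fun l' hl' hne => two l l' hne.symm hl hl' hb⟩
    · push Not at hbad
      exact ⟨a, fin a fun l hl _ => hbad l hl⟩
  · push Not at hP
    have hA := h.agree (fun _ => True) x (fun a b c _ _ _ h1 h2 h3 => hP a b c h1 h2 h3)
    obtain ⟨u, v, huv⟩ := Fintype.exists_pair_of_one_lt_card (α := Λ) (by omega)
    exact ⟨u, t u v x, fun a b hab _ _ => hA a b u v trivial trivial trivial trivial hab huv⟩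

theorem Q_conj (h : TS t) {a b : Λ} (hab : a ≠ b) {x : X} {e : Λ} (hQ : Q t x e) : Q t (t a b x) (swap a b e) := by
  obtain ⟨x', hx⟩ := hQ
  refine ⟨t a b x', fun i j hij hi hj => ?_⟩
  have hR := h.R a b hab i j hij
  have e1 : t i j * t a b = t a b * t (swap a b i) (swap a b j) := by
    rw [← hR, ← mul_assoc, ← mul_assoc, h.sq a b hab, one_mul]
  have e2 := pt e1 x
  rw [Perm.mul_apply, Perm.mul_apply] at e2
  rw [e2, hx _ _ (by simpa using hij)]
  · rintro rfl; simp at hi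
  · rintro rfl; simp at hj

theorem Q_unique [Fintype Λ] (h : TS t) (hN : 7 ≤ Fintype.card Λ) (hk : 2 < Nat.card X)
    (ht : ∀ Z : X → Prop, (∃ x, Z x) → (∀ a b, a ≠ b → ∀ x, Z x → Z (t a b x)) → ∀ x, Z x)
    {x : X} {e e' : Λ} (hQ : Q t x e) (hQ' : Q t x e') : e = e' := by
  by_contra hne
  obtain ⟨x', hx⟩ := hQ
  obtain ⟨y', hy⟩ := hQ'
  have hcard : 1 < (Finset.univ \ {e, e'} : Finset Λ).card := by
    have := Finset.le_card_sdiff ({e, e'} : Finset Λ) Finset.univ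
    have h3 : ({e, e'} : Finset Λ).card ≤ 2 := Finset.card_le_two
    rw [Finset.card_univ] at this
    omega
  obtain ⟨m, hm, n, hn, hmn⟩ := Finset.one_lt_card.1 hcard
  simp only [Finset.mem_sdiff, Finset.mem_univ, true_and, Finset.mem_insert, Finset.mem_singleton, not_or] at hm hn
  have exy : x' = y' := by rw [← hx m n hmn hm.1 hn.1, hy m n hmn hm.2 hn.2]
  subst exy
  have ee : t e e' x = x' := by
    have e1 := hy e m (Ne.symm hm.1) hne hm.2
    have e2 := hx m e' hm.2 hm.1 (Ne.symm hne)
    rw [h.third (Ne.symm hm.1) hne hm.2 (x := x) (by rw [e1, e2]), e1]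
  have all : ∀ a b, a ≠ b → t a b x = x' := by
    intro a b hab
    by_cases h1 : a ≠ e ∧ b ≠ e
    · exact hx a b hab h1.1 h1.2
    by_cases h2 : a ≠ e' ∧ b ≠ e'
    · exact hy a b hab h2.1 h2.2
    have h3 : (a = e ∧ b = e') ∨ (a = e' ∧ b = e) := by grind
    rcases h3 with ⟨rfl, rfl⟩ | ⟨rfl, rfl⟩
    · exact ee
    · rw [h.symm]; exact ee
  have := ht (fun z => z = x ∨ z = x') ⟨x, Or.inl rfl⟩ (by
    rintro a b hab z (rfl | rfl)
    · right; exact all a b hab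
    · left; rw [← all a b hab]; exact h.inv hab _)
  have hle : Nat.card X ≤ Nat.card Bool := by
    refine Nat.card_le_card_of_surjective (fun b : Bool => if b then x else x') ?_
    intro z
    rcases this z with rfl | rfl
    · exact ⟨true, rfl⟩
    · exact ⟨false, rfl⟩
  simp at hle
  omega

theorem dvd [Finite X] [Fintype Λ] (h : TS t) (hN : 7 ≤ Fintype.card Λ) (hk : 2 < Nat.card X)
    (ht : ∀ Z : X → Prop, (∃ x, Z x) → (∀ a b, a ≠ b → ∀ x, Z x → Z (t a b x)) → ∀ x, Z x)
    (hD : DD t) : Fintype.card Λ ∣ Nat.card X := by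
  choose c hc using h.center hN hD
  have heq : ∀ a b, a ≠ b → ∀ x, c (t a b x) = swap a b (c x) := fun a b hab x =>
    h.Q_unique hN hk ht (hc _) (h.Q_conj hab (hc x))
  have : Nonempty Λ := Fintype.card_pos_iff.1 (by omega)
  obtain ⟨e0⟩ := this
  have hf : ∀ e, Nat.card {x // c x = e} = Nat.card {x // c x = e0} := by
    intro e
    by_cases he : e = e0
    · rw [he]
    · refine Nat.card_congr ((t e e0).subtypeEquiv fun x => ?_)
      rw [heq e e0 he]
      constructor
      · intro h1; rw [h1, swap_apply_left]
      · intro h1; rw [swap_apply_eq_iff, swap_apply_right] at h1; exact h1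
  have h1 : Nat.card X = ∑ e, Nat.card {x // c x = e} := by
    rw [← Nat.card_sigma]
    exact (Nat.card_congr (Equiv.sigmaFiberEquiv c)).symm
  rw [h1, Finset.sum_congr rfl (fun e _ => hf e), Finset.sum_const, Finset.card_univ, smul_eq_mul]
  exact dvd_mul_right _ _
end TS


theorem T_fpf {X : Type} {g : ℕ} {s : ℕ → Perm X} (h2 : ∀ i < g, s i * s i = 1)
    (hf : ∀ i < g, ∀ x, s i x ≠ x) (i : ℕ) : ∀ d, i + d < g → ∀ x, T s i d x ≠ x := by
  intro d
  induction d with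
  | zero => intro h; exact hf _ h
  | succ d ih =>
    intro h x e
    simp only [T, Perm.mul_apply] at e
    apply ih (by omega) (s (i+d+1) x)
    have := congrArg (s (i+d+1)) e
    have inv : ∀ z, s (i+d+1) (s (i+d+1) z) = z := pt (h2 (i+d+1) (by omega))
    rw [inv] at this
    exact this

theorem tt_TS {X : Type} {g : ℕ} (hg : 6 ≤ g) {s : ℕ → Perm X} (hs : Br g s) (h2 : ∀ i < g, s i * s i = 1)
    (hf : ∀ i < g, ∀ x, s i x ≠ x) : TS (fun a b : Fin (g+1) => tt s a b) where
  symm a b := tt_symm s a b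
  sq a b hab := by
    have hab' : (a : ℕ) ≠ b := fun h => hab (Fin.ext h)
    have := a.2
    have := b.2
    simp only [tt]
    split_ifs
    · exact T_sq h2 _ _ (by omega)
    · exact T_sq h2 _ _ (by omega)
  fpf a b hab := by
    have hab' : (a : ℕ) ≠ b := fun h => hab (Fin.ext h)
    have := a.2
    have := b.2
    simp only [tt]
    split_ifs
    · exact T_fpf h2 hf _ _ (by omega)
    · exact T_fpf h2 hf _ _ (by omega)
  R a b hab i j hij := tt_R (by omega) hs h2 a b hab i j hij

theorem agree34 {X : Type} [Finite X] {g : ℕ} (hg : 8 ≤ g) (hk : Nat.card X ≤ 2 * g + 1) {s : ℕ → Perm X}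
    (hs : Br g s) (h2 : ∀ i < g, s i * s i = 1) (x : X) (hx : s 0 x ≠ s 1 x) : s 3 x = s 4 x := by
  have i0 : ∀ x, s 0 (s 0 x) = x := pt (h2 0 (by omega))
  have i1 : ∀ x, s 1 (s 1 x) = x := pt (h2 1 (by omega))
  have hb : ∀ x, s 0 (s 1 (s 0 x)) = s 1 (s 0 (s 1 x)) := pt (hs.braid 0 (by omega))
  have c0 : ∀ i, s 0 * s (i+3) = s (i+3) * s 0 := fun i => hs.comm 0 (i+3) (by omega)
  have c1 : ∀ i, s 1 * s (i+3) = s (i+3) * s 1 := fun i => hs.comm 1 (i+3) (by omega)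
  have ne : ∀ x, s 0 x ≠ s 1 x → s 0 (s 1 x) ≠ x := by
    intro x hx e
    apply hx
    rw [← e, i0, e]
  have cub : ∀ x, s 0 (s 1 (s 0 (s 1 (s 0 (s 1 x))))) = x := by
    intro x
    rw [hb, i1, i0, i1]
  refine L1' (g := g - 3) (by omega) (FF_all _ (by omega)) (s 0 * s 1) (fun i => s (i+3)) (hs.shift 3) ?_
    (fun x => s 0 x ≠ s 1 x) ?_ ?_ 3 ?_ ?_ 0 (by omega) 1 (by omega) x hx
  · intro i
    rw [mul_assoc, c1, ← mul_assoc, c0, mul_assoc]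
  · intro x
    simp only [Perm.mul_apply]
    rw [not_iff_not, i0]
    constructor
    · intro e
      have e1 : x = s 0 (s 1 x) := (s 1).injective e
      conv_lhs => rw [e1, i0]
    · intro e
      rw [← hb, e, i1, e]
  · intro i x
    rw [not_iff_not]
    have e0 := pt (c0 i) x
    have e1 := pt (c1 i) x
    simp only [Perm.mul_apply] at e0 e1
    rw [e0, e1]
    exact (s (i+3)).injective.eq_iff
  · intro x hx m h0 h3
    have hm : m = 1 ∨ m = 2 := by omega
    rcases hm with rfl | rfl
    · simpa using ne x hx
    · intro e
      simp only [pow_two, Perm.mul_apply] at e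
      have := cub x
      rw [e] at this
      exact ne x hx this
  · have : Nat.card {x // s 0 x ≠ s 1 x} ≤ Nat.card X := Nat.card_le_card_of_injective _ Subtype.val_injective
    omega

theorem caseB3 {g : ℕ} (hg : 6 ≤ g) {X : Type} [Finite X] (hk1 : g + 2 ≤ Nat.card X)
    (hk : Nat.card X ≤ 2 * g + 1) {s : ℕ → Perm X} (hs : Br g s) (ht : TransS g s)
    (hinv : ∀ i < g, ∀ x, s i (s i x) = x) (hf : ∀ i < g, ∀ x, s i x ≠ x) : False := by
  have h2 : ∀ i < g, s i * s i = 1 := fun i hi => Equiv.ext (hinv i hi)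
  have hT := tt_TS hg hs h2 hf
  have hN : 7 ≤ Fintype.card (Fin (g+1)) := by rw [Fintype.card_fin]; omega
  have ht' : ∀ Z : X → Prop, (∃ x, Z x) → (∀ a b : Fin (g+1), a ≠ b → ∀ x, Z x → Z (tt s a b x)) → ∀ x, Z x := by
    intro Z hZ h
    refine ht Z hZ fun i hi x hx => ?_
    have := h ⟨i, by omega⟩ ⟨i+1, by omega⟩ (by simp) x hx
    simp only at this
    rw [tt_lt s i 0] at this
    exact this
  have hD : TS.DD (fun a b : Fin (g+1) => tt s a b) := by
    intro a b c d e f hn x hx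
    by_cases h18 : Nat.card X < 18
    · have : ∃ k : Fin (g+1), k ∉ [a, b, c, d, e, f].toFinset := by
        by_contra hcon
        push Not at hcon
        have h1 : (Finset.univ : Finset (Fin (g+1))).card ≤ [a, b, c, d, e, f].toFinset.card :=
          Finset.card_le_card fun k _ => hcon k
        have h3 := List.toFinset_card_le [a, b, c, d, e, f]
        simp only [Finset.card_univ, Fintype.card_fin, List.length_cons, List.length_nil] at h1 h3
        omega
      obtain ⟨k, hkk⟩ := this
      rw [List.mem_toFinset] at hkk
      have hn2 : ([a, b, c, d, e, f] ++ [k]).Nodup := by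
        rw [List.nodup_append]
        refine ⟨hn, by simp, ?_⟩
        intro u hu v hv huv
        simp only [List.mem_singleton] at hv
        subst hv; subst huv; exact hkk hu
      exact hT.D7 h18 hn2 hx
    · obtain ⟨p, hp⟩ := Equiv.Perm.exists_extending_pair (β := Fin (g+1)) (Fin.castLE (show 6 ≤ g + 1 by omega))
        (fun i : Fin 6 => [a, b, c, d, e, f].get i) (Fin.castLE_injective _) (List.nodup_iff_injective_get.1 hn)
      obtain ⟨w, hw⟩ := tt_E hs h2 p
      have key : ∀ i j : Fin 6, i ≠ j → ∀ x, w (tt s i j (w⁻¹ x)) = tt s (p (Fin.castLE (by omega) i)) (p (Fin.castLE (by omega) j)) x := by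
        intro i j hij x
        exact pt (hw (Fin.castLE (by omega) i) (Fin.castLE (by omega) j) (fun h => hij (Fin.castLE_injective _ h))) x
      have k0 := key 0 1 (by decide) x
      have k1 := key 1 2 (by decide) x
      have k3 := key 3 4 (by decide) x
      have k4 := key 4 5 (by decide) x
      rw [hp, hp] at k0 k1 k3 k4
      change w (tt s 0 (0+0+1) (w⁻¹ x)) = tt s a b x at k0
      change w (tt s 1 (1+0+1) (w⁻¹ x)) = tt s b c x at k1
      change w (tt s 3 (3+0+1) (w⁻¹ x)) = tt s d e x at k3
      change w (tt s 4 (4+0+1) (w⁻¹ x)) = tt s e f x at k4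
      rw [tt_lt s 0 0] at k0
      rw [tt_lt s 1 0] at k1
      rw [tt_lt s 3 0] at k3
      rw [tt_lt s 4 0] at k4
      simp only at hx ⊢
      rw [← k3, ← k4]
      rw [← k0, ← k1] at hx
      have := agree34 (by omega) hk hs h2 (w⁻¹ x) (fun h => hx (by simp only [T]; rw [h]))
      simp only [T]; rw [this]
  have hdvd := hT.dvd hN (by omega) ht' hD
  rw [Fintype.card_fin] at hdvd
  obtain ⟨m, hm⟩ := hdvd
  rw [hm] at hk hk1
  have : m < 2 := by by_contra h; nlinarith
  have : 1 < m := by by_contra h; nlinarith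
  omega


theorem main_s {g : ℕ} (hg : 6 ≤ g) {X : Type} [Finite X] (hk1 : g + 2 ≤ Nat.card X)
    (hk : Nat.card X ≤ 2 * g + 1) {s : ℕ → Perm X} (hs : Br g s) (ht : TransS g s) :
    ∀ i < g, ∀ j < g, s i = s j := by
  rcases trichotomy hg hk hs with h | h | h
  · exact h
  · rcases caseA_disj hg hk hs ht h with h1 | h1
    · exact h1
    · exact (caseA_final hg hk1 hk hs ht h1).elim
  · rcases caseB_disj hg hk hs ht h with h1 | h1
    · exact h1
    · exfalso
      obtain ⟨hinv0, hf⟩ := caseB1 hg hk hs h h1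
      have hinv : ∀ i < g, ∀ x, s i (s i x) = x := by
        intro i hi x
        obtain ⟨w, hw⟩ := hs.exists_conj hi
        rw [← hw]
        simp [Perm.mul_apply, hinv0]
      rcases hf with hf | hf
      · have h0 : ∀ x, s 0 x ≠ x := by
          intro x hx
          have : Nonempty {x // s 0 x = x} := ⟨⟨x, hx⟩⟩
          have : 0 < Nat.card {x // s 0 x = x} := Nat.card_pos
          omega
        refine caseB3 hg hk1 hk hs ht hinv fun i hi x hx => ?_
        obtain ⟨w, hw⟩ := hs.exists_conj hi
        rw [← hw, Perm.mul_apply, Perm.mul_apply] at hx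
        apply h0 (w⁻¹ x)
        rw [Equiv.Perm.eq_inv_iff_eq]; exact hx
      · refine caseB2 hg hk hs hinv hf fun i j hij hj x hi hx => ?_
        exact h1 i j hij hj x (fun h => h.1 hi) (fun h => h.1 hx)

end BraidProof

/-- Lin. Let `n ≥ 7` and `n+1 ≤ k ≤ 2n-1`. Then every transitive
homomorphism `ψ : B_n → Sym_k` is cyclic. -/
theorem transitive_hom_middle_is_cyclic (n k : ℕ) (hn : 7 ≤ n)
    (hk1 : n + 1 ≤ k) (hk2 : k ≤ 2 * n - 1)
    (ψ : BraidGroup n →* Equiv.Perm (Fin k)) (hψ : IsTransitiveHom ψ) :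
    IsCyclicHom ψ := by
  classical
  let s : ℕ → Equiv.Perm (Fin k) := fun i => if h : i < n - 1 then ψ (σ ⟨i, h⟩) else 1
  have sval : ∀ i (h : i < n - 1), s i = ψ (σ ⟨i, h⟩) := fun i h => dif_pos h
  have rel : ∀ r ∈ braidRels n, (PresentedGroup.mk (braidRels n)) r = 1 := fun r hr =>
    PresentedGroup.one_of_mem hr
  have hs : Br (n - 1) s := by
    refine ⟨fun i j hij => ?_, fun i hi => ?_⟩
    · by_cases hj : j < n - 1
      · rw [sval i (by omega), sval j hj, ← map_mul, ← map_mul]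
        congr 1
        have := rel _ (Or.inl ⟨⟨i, by omega⟩, ⟨j, hj⟩, Or.inl hij, rfl⟩)
        rw [map_mul, map_inv, mul_inv_eq_one, map_mul, map_mul] at this
        exact this
      · have : s j = 1 := dif_neg hj
        rw [this, one_mul, mul_one]
    · rw [sval i (by omega), sval (i+1) hi, ← map_mul, ← map_mul, ← map_mul, ← map_mul]
      congr 1
      have := rel _ (Or.inr ⟨⟨i, by omega⟩, ⟨i+1, hi⟩, rfl, rfl⟩)
      rw [map_mul, map_inv, mul_inv_eq_one, map_mul, map_mul, map_mul, map_mul] at this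
      exact this
  have ht : TransS (n - 1) s := by
    intro Z ⟨x0, hx0⟩ hZ y
    obtain ⟨w, rfl⟩ := hψ x0 y
    have hZ1 : ∀ i x, Z x → Z (ψ (σ i) x) := by
      intro i x hx
      have := hZ i i.2 x hx
      rwa [sval i i.2] at this
    have hpow : ∀ i (m : ℕ) x, Z x → Z ((ψ (σ i) ^ m) x) := by
      intro i m
      induction m with
      | zero => intro x hx; simpa using hx
      | succ m ih => intro x hx; rw [pow_succ, Equiv.Perm.mul_apply]; exact ih _ (hZ1 i x hx)
    have hw : w ∈ Subgroup.closure (Set.range (PresentedGroup.of (rels := braidRels n))) := by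
      rw [PresentedGroup.closure_range_of]; trivial
    have key : ∀ x, Z x → Z (ψ w x) := by
      induction hw using Subgroup.closure_induction_left with
      | one => intro x hx; simpa using hx
      | mul_left a ha b hb ih =>
        obtain ⟨i, rfl⟩ := ha
        intro x hx
        rw [map_mul, Equiv.Perm.mul_apply]
        exact hZ1 i _ (ih x hx)
      | inv_mul_cancel a ha b hb ih =>
        obtain ⟨i, rfl⟩ := ha
        intro x hx
        rw [map_mul, Equiv.Perm.mul_apply, map_inv]
        have e : (ψ (PresentedGroup.of i))⁻¹ = ψ (σ i) ^ (orderOf (ψ (σ i)) - 1) := by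
          rw [inv_eq_iff_mul_eq_one]
          change ψ (σ i) * _ = 1
          rw [← pow_succ', Nat.sub_add_cancel (orderOf_pos _), pow_orderOf_eq_one]
        rw [e]
        exact hpow i _ _ (ih x hx)
    exact key _ hx0
  have hmain := main_s (g := n - 1) (by omega) (X := Fin k) (by rw [Nat.card_fin]; omega)
    (by rw [Nat.card_fin]; omega) hs ht
  intro i j
  have := hmain i i.2 j j.2
  rw [sval i i.2, sval j j.2] at this
  exact this
end
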